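/- arXiv:1508.05766 — 3 statements merged into one kernel-verified Lean document; each statement's English description precedes it below -/
import Mathlib

section
/- Let n ∈ ℕ, let I be a path instance of length ℓ over a set A, and suppose all constraint relations B_i and B_{i,i+1} of I are preserved by a chain of n Hagemann–Mitschke terms p_0, …, p_n on A. If (s_0, s_1, …, s_n; i_1, …, i_n) is an n-braid in I, then there exists a solution t of I such that t(i_1) = s_0(i_1) and t(i_n) = s_n(i_n). -/
namespace CSPPaper

/-- A relational structure on `A`: a family of finitary relations (the basic
relations), a relation of arity `n` being a set of `n`-tuples `Fin n → A`. -/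
structure RelStruct (A : Type) where
  basic : Set (Σ n : ℕ, Set (Fin n → A))

/-- A CSP instance with variables `V` over domain `A`: a set of constraints,
each consisting of a scope (a tuple of variables) and a constraint relation. -/
structure Instance (A : Type) (V : Type) where
  constraints : Set (Σ n : ℕ, (Fin n → V) × Set (Fin n → A))

/-- `f : V → A` is a solution of the instance `I`. -/
def Instance.Sol {A V : Type} (I : Instance A V) (f : V → A) : Prop :=
  ∀ c ∈ I.constraints, (fun i => f (c.2.1 i)) ∈ c.2.2

def Instance.Satisfiable {A V : Type} (I : Instance A V) : Prop :=
  ∃ f, I.Sol f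

/-- `I` is an instance of `CSP(𝔸)`: all its constraint relations are basic
relations of `𝔸`. -/
def IsCSPInstance {A V : Type} (𝔸 : RelStruct A) (I : Instance A V) : Prop :=
  ∀ c ∈ I.constraints, (⟨c.1, c.2.2⟩ : Σ n : ℕ, Set (Fin n → A)) ∈ 𝔸.basic

/-- An atom of a Datalog rule over the variable set `Fin r`: a predicate
(a relation on `A`) applied to a tuple of variables. -/
structure Atom (A : Type) (r : ℕ) where
  arity : ℕ
  scope : Fin arity → Fin r
  rel : Set (Fin arity → A)

def Atom.holds {A : Type} {r : ℕ} (a : Atom A r) (f : Fin r → A) : Prop :=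
  (fun i => f (a.scope i)) ∈ a.rel

/-- A rule of the `r`-ary maximal symmetric Datalog program `𝒫_𝔸^r` consistent
with `𝔸`: a linear Datalog rule on at most `r` variables, whose head is an IDB
(an arbitrary relation on `A` of arity at most `r`), whose body contains at most
one IDB atom (`idb`) and otherwise non-IDB atoms for basic relations of `𝔸`
of arity at most `r` (`edb`, without repetition), such that the rule is
consistent with `𝔸`, and, if the body contains an IDB atom, its mirror image is
also consistent with `𝔸`. -/
structure Rule (A : Type) (𝔸 : RelStruct A) (r : ℕ) where
  head : Atom A r
  idb : Option (Atom A r)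
  edb : List (Atom A r)
  head_arity : head.arity ≤ r
  idb_arity : ∀ a ∈ idb, a.arity ≤ r
  edb_arity : ∀ a ∈ edb, a.arity ≤ r
  edb_basic : ∀ a ∈ edb, (⟨a.arity, a.rel⟩ : Σ n : ℕ, Set (Fin n → A)) ∈ 𝔸.basic
  nodup : edb.Nodup
  consistent : ∀ f : Fin r → A,
    (∀ a ∈ idb, a.holds f) → (∀ a ∈ edb, a.holds f) → head.holds f
  mirror : ∀ a ∈ idb, ∀ f : Fin r → A,
    head.holds f → (∀ b ∈ edb, b.holds f) → a.holds f

/-- `Derives 𝔸 r I ρ R`: the `r`-ary maximal symmetric Datalog program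
`𝒫_𝔸^r` consistent with `𝔸`, run on the instance `I`, derives `R(ρ)`.
This holds if `(ρ, R)` is a constraint of `I`, or if some rule of `𝒫_𝔸^r`
with head `R(τ)` admits an evaluation `ω` of its variables into `V` with
`ω ∘ τ = ρ`, whose (at most one) IDB body atom is derived and whose non-IDB
body atoms are constraints of `I` under `ω`. -/
inductive Derives {A V : Type} (𝔸 : RelStruct A) (r : ℕ) (I : Instance A V) :
    ∀ {n : ℕ}, (Fin n → V) → Set (Fin n → A) → Prop
  | base {n : ℕ} (ρ : Fin n → V) (R : Set (Fin n → A)) :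
      (⟨n, ρ, R⟩ : Σ n : ℕ, (Fin n → V) × Set (Fin n → A)) ∈ I.constraints →
      Derives 𝔸 r I ρ R
  | step (rule : Rule A 𝔸 r) (ω : Fin r → V) :
      (∀ a ∈ rule.idb, Derives 𝔸 r I (fun i => ω (a.scope i)) a.rel) →
      (∀ a ∈ rule.edb,
        (⟨a.arity, fun i => ω (a.scope i), a.rel⟩ :
          Σ n : ℕ, (Fin n → V) × Set (Fin n → A)) ∈ I.constraints) →
      Derives 𝔸 r I (fun i => ω (rule.head.scope i)) rule.head.rel

/-- `𝒫_𝔸^r(I) ⊢ G`: the program derives a goal predicate, i.e. an empty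
relation of arity at most `r`. -/
def DerivesGoal {A V : Type} (𝔸 : RelStruct A) (r : ℕ) (I : Instance A V) : Prop :=
  ∃ (n : ℕ) (ρ : Fin n → V), n ≤ r ∧ Derives 𝔸 r I ρ (∅ : Set (Fin n → A))

/-- `𝒫_𝔸^r(I) ⊢ J`: the program run on `I` derives every constraint of `J`. -/
def DerivesInstance {A V : Type} (𝔸 : RelStruct A) (r : ℕ) (I J : Instance A V) : Prop :=
  ∀ c ∈ J.constraints, Derives 𝔸 r I c.2.1 c.2.2

/-- An `m`-ary operation `t` preserves the `n`-ary relation `R`. -/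
def PreservesRel {A : Type} {m n : ℕ} (t : (Fin m → A) → A) (R : Set (Fin n → A)) : Prop :=
  ∀ rows : Fin m → Fin n → A, (∀ j, rows j ∈ R) → (fun i => t (fun j => rows j i)) ∈ R

/-- A polymorphism of `𝔸`: an operation preserving all basic relations. -/
def IsPolymorphism {A : Type} {m : ℕ} (𝔸 : RelStruct A) (t : (Fin m → A) → A) : Prop :=
  ∀ R ∈ 𝔸.basic, PreservesRel t R.2

def ternaryOp {A : Type} (p : A → A → A → A) : (Fin 3 → A) → A :=
  fun v => p (v 0) (v 1) (v 2)

/-- A chain of `n` Hagemann–Mitschke terms: idempotent ternary operations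
`p 0, …, p n` with `p 0 x y z = x`, `p k x x y = p (k+1) x y y`, `p n x y z = z`. -/
def IsHMChain {A : Type} (n : ℕ) (p : ℕ → A → A → A → A) : Prop :=
  (∀ k ≤ n, ∀ x : A, p k x x x = x) ∧
  (∀ x y z : A, p 0 x y z = x) ∧
  (∀ x y z : A, p n x y z = z) ∧
  (∀ k < n, ∀ x y : A, p k x x y = p (k + 1) x y y)

def Pres3Set {A : Type} (p : A → A → A → A) (S : Set A) : Prop :=
  ∀ x y z, x ∈ S → y ∈ S → z ∈ S → p x y z ∈ S

def Pres3Rel {A : Type} (p : A → A → A → A) (E : Set (A × A)) : Prop :=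
  ∀ u v w, u ∈ E → v ∈ E → w ∈ E → (p u.1 v.1 w.1, p u.2 v.2 w.2) ∈ E

def PresOpSet {A : Type} {m : ℕ} (t : (Fin m → A) → A) (S : Set A) : Prop :=
  ∀ x : Fin m → A, (∀ j, x j ∈ S) → t x ∈ S

def PresOpRel {A : Type} {m : ℕ} (t : (Fin m → A) → A) (E : Set (A × A)) : Prop :=
  ∀ x y : Fin m → A, (∀ j, (x j, y j) ∈ E) → (t x, t y) ∈ E

/-- A path instance of length `len`: variables `1, …, len`, one unary
constraint `B i` on each variable `i ∈ [1, len]`, and one binary constraint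
`E i` with scope `(i, i+1)` for each `i ∈ [1, len-1]`. -/
structure PathInstance (A : Type) where
  len : ℕ
  B : ℕ → Set A
  E : ℕ → Set (A × A)

/-- A solution of the subinstance of the path instance `I` induced by `[a, b]`. -/
def IsSolutionOn {A : Type} (I : PathInstance A) (a b : ℕ) (s : ℕ → A) : Prop :=
  (∀ i, a ≤ i → i ≤ b → s i ∈ I.B i) ∧
  (∀ i, a ≤ i → i + 1 ≤ b → (s i, s (i + 1)) ∈ I.E i)

def IsSolution {A : Type} (I : PathInstance A) (s : ℕ → A) : Prop :=
  IsSolutionOn I 1 I.len s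

def unaryRel {A : Type} (S : Set A) : Set (Fin 1 → A) := {f | f 0 ∈ S}

def pairRel {A : Type} (E : Set (A × A)) : Set (Fin 2 → A) := {f | (f 0, f 1) ∈ E}

/-- The path instance `I`, presented as a CSP instance on the variable set `ℕ`. -/
def PathInstance.toInstance {A : Type} (I : PathInstance A) : Instance A ℕ where
  constraints :=
    {c | (∃ i, 1 ≤ i ∧ i ≤ I.len ∧
            c = ⟨1, fun _ => i, unaryRel (I.B i)⟩) ∨
         (∃ i, 1 ≤ i ∧ i + 1 ≤ I.len ∧
            c = ⟨2, ![i, i + 1], pairRel (I.E i)⟩)}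

/-- An `n`-braid in the path instance `I`: solutions `s 0, …, s n` and indices
`1 ≤ idx 1 < … < idx n ≤ I.len` with `s k (idx k) = s (k+1) (idx k)` and
`s (k-1) (idx (k+1)) = s k (idx (k+1))` for `k = 1, …, n-1`. -/
def IsBraid {A : Type} (I : PathInstance A) (n : ℕ) (s : ℕ → ℕ → A) (idx : ℕ → ℕ) : Prop :=
  (∀ k ≤ n, IsSolution I (s k)) ∧
  1 ≤ idx 1 ∧ idx n ≤ I.len ∧
  (∀ k, 1 ≤ k → k < n → idx k < idx (k + 1)) ∧
  (∀ k, 1 ≤ k → k + 1 ≤ n →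
    s k (idx k) = s (k + 1) (idx k) ∧ s (k - 1) (idx (k + 1)) = s k (idx (k + 1)))

/-- The binary constraint of `I` with scope `(i, i+1)` is subdirect. -/
def SubdirectAt {A : Type} (I : PathInstance A) (i : ℕ) : Prop :=
  (I.B i).Nonempty ∧ (I.B (i + 1)).Nonempty ∧
  (∀ a ∈ I.B i, ∃ b ∈ I.B (i + 1), (a, b) ∈ I.E i) ∧
  (∀ b ∈ I.B (i + 1), ∃ a ∈ I.B i, (a, b) ∈ I.E i)

/-- The subinstance of `I` induced by `[a, b]` is subdirect. -/
def SubdirectOn {A : Type} (I : PathInstance A) (a b : ℕ) : Prop :=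
  ∀ i, a ≤ i → i + 1 ≤ b → SubdirectAt I i

def Subdirect {A : Type} (I : PathInstance A) : Prop := SubdirectOn I 1 I.len

/-- The sets `C_i`: `C 1 = B 1` and
`C (i+1) = {b ∈ B (i+1) | ∃ c ∈ C i, (c, b) ∈ E i}`. -/
def reachSet {A : Type} (I : PathInstance A) : ℕ → Set A
  | 0 => ∅
  | 1 => I.B 1
  | (i + 2) => {b ∈ I.B (i + 2) | ∃ c ∈ reachSet I (i + 1), (c, b) ∈ I.E (i + 1)}

/-- `B_{i,i+1}` contains a backward edge: an edge `(b, c) ∈ E i` with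
`b ∈ B i \ C i` and `c ∈ C (i+1)`. -/
def BackwardAt {A : Type} (I : PathInstance A) (i : ℕ) : Prop :=
  1 ≤ i ∧ i + 1 ≤ I.len ∧
  ∃ b c, (b, c) ∈ I.E i ∧ b ∈ I.B i ∧ b ∉ reachSet I i ∧ c ∈ reachSet I (i + 1)

/-- Adjacency in the graph `Conn(I_{[lo,hi]})`: its vertices are pairs `(i, a)`
with `a ∈ B i`, `lo ≤ i ≤ hi`, and `(i, a)` is adjacent to `(i+1, b)` whenever
`(a, b) ∈ E i`. -/
def connAdj {A : Type} (I : PathInstance A) (lo hi : ℕ) (p q : ℕ × A) : Prop :=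
  lo ≤ p.1 ∧ p.1 + 1 ≤ hi ∧ q.1 = p.1 + 1 ∧
  p.2 ∈ I.B p.1 ∧ q.2 ∈ I.B q.1 ∧ (p.2, q.2) ∈ I.E p.1

/-- `λ_{I,lo,hi}`: the pairs `(a, b) ∈ B lo × B hi` joined by an undirected path
in `Conn(I_{[lo,hi]})`. -/
def lamRel {A : Type} (I : PathInstance A) (lo hi : ℕ) : Set (A × A) :=
  {ab | ab.1 ∈ I.B lo ∧ ab.2 ∈ I.B hi ∧
    Relation.ReflTransGen (fun p q => connAdj I lo hi p q ∨ connAdj I lo hi q p)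
      (lo, ab.1) (hi, ab.2)}

open Classical in
/-- The variable set `U` of the instance `I_λ`: the variables `1`, `len`, and
`i, i+1` for every index `i` such that `B_{i,i+1}` has a backward edge. -/
noncomputable def lamVars {A : Type} (I : PathInstance A) : Finset ℕ :=
  (Finset.Icc 1 I.len).filter
    (fun v => v = 1 ∨ v = I.len ∨ BackwardAt I v ∨ (2 ≤ v ∧ BackwardAt I (v - 1)))

/-- The `t`-th smallest element of `U` (`1`-indexed). -/
noncomputable def lamEnum {A : Type} (I : PathInstance A) (t : ℕ) : ℕ :=
  ((lamVars I).sort (· ≤ ·)).getD (t - 1) 0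

/-- The instance `I_λ`, presented as a path instance whose `t`-th variable is
the `t`-th smallest element of `U`: it consists of the subinstance of `I`
induced by `U`, where each gap between consecutive elements `u < w` of `U` with
`w > u + 1` is filled by the binary constraint `λ_{I,u,w}`. -/
noncomputable def lamInst {A : Type} (I : PathInstance A) : PathInstance A where
  len := (lamVars I).card
  B := fun t => I.B (lamEnum I t)
  E := fun t =>
    if lamEnum I (t + 1) = lamEnum I t + 1 then I.E (lamEnum I t)
    else lamRel I (lamEnum I t) (lamEnum I (t + 1))

/-- Unpacking an `m`-tuple of elements of `V^k` into an `m*k`-tuple of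
elements of `V`. -/
def unpackTuple {X : Type} {m k : ℕ} (σ : Fin m → Fin k → X) : Fin (m * k) → X :=
  fun t => σ t.divNat t.modNat

/-- Unpacking an `m`-ary relation on `A^k` into an `m*k`-ary relation on `A`. -/
def unpackRel {A : Type} {m k : ℕ} (U : Set (Fin m → Fin k → A)) :
    Set (Fin (m * k) → A) :=
  {t | ∃ u ∈ U, ∀ i : Fin (m * k), t i = u i.divNat i.modNat}

/-- The instance `I` has pathwidth at most `p`. -/
def PathwidthLE {A V : Type} (I : Instance A V) (p : ℕ) : Prop :=
  ∃ (m : ℕ) (U : Fin m → Set V),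
    (∀ v : V, ∃ i, v ∈ U i) ∧
    (∀ i, (U i).Finite ∧ (U i).ncard ≤ p + 1) ∧
    (∀ i j q : Fin m, i ≤ q → q ≤ j → ∀ v, v ∈ U i → v ∈ U j → v ∈ U q) ∧
    (∀ c ∈ I.constraints, ∃ i, Set.range c.2.1 ⊆ U i)

/-- `𝔸` has pathwidth duality `p`: for every unsatisfiable instance `I` of
`CSP(𝔸)` there is an unsatisfiable instance `J` of `CSP(𝔸)` of pathwidth at
most `p` such that identifying some variables of `J` (along `h`) yields a
subinstance of `I`. -/
def HasPathwidthDuality {A : Type} (𝔸 : RelStruct A) (p : ℕ) : Prop :=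
  ∀ (V : Type) (I : Instance A V), IsCSPInstance 𝔸 I → ¬I.Satisfiable →
    ∃ (W : Type) (J : Instance A W) (h : W → V),
      IsCSPInstance 𝔸 J ∧ ¬J.Satisfiable ∧ PathwidthLE J p ∧
      ∀ c ∈ J.constraints,
        (⟨c.1, fun i => h (c.2.1 i), c.2.2⟩ :
          Σ n : ℕ, (Fin n → V) × Set (Fin n → A)) ∈ I.constraints

/-- The `k`-th bubble power `𝔸^(k)` of `𝔸`: the relational structure on `A^k`
whose basic relations are all unary relations definable as conjunctions of
basic relations of `𝔸` (with identification of variables and dummy variables,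
but no existential quantification), and all binary relations
`E_ℐ = {(a, b) | ∀ (i,j) ∈ ℐ, a i = b j}` for `ℐ ⊆ [k]²`. -/
def bubblePower {A : Type} (𝔸 : RelStruct A) (k : ℕ) : RelStruct (Fin k → A) where
  basic :=
    {r | (∃ L : Set (Σ n : ℕ, (Fin n → Fin k) × Set (Fin n → A)),
            (∀ c ∈ L, (⟨c.1, c.2.2⟩ : Σ n : ℕ, Set (Fin n → A)) ∈ 𝔸.basic) ∧
            r = ⟨1, {f : Fin 1 → (Fin k → A) |
                      ∀ c ∈ L, (fun i => f 0 (c.2.1 i)) ∈ c.2.2}⟩) ∨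
         (∃ Idx : Set (Fin k × Fin k),
            r = ⟨2, {f : Fin 2 → (Fin k → A) | ∀ q ∈ Idx, f 0 q.1 = f 1 q.2}⟩)}


theorem IsSolution.glue {A : Type} {I : PathInstance A} {f g : ℕ → A} {j : ℕ}
    (hf : IsSolution I f) (hg : IsSolution I g) (h : f j = g j) :
    IsSolution I (fun i => if i ≤ j then f i else g i) := by
  refine ⟨fun i h1 h2 => ?_, fun i h1 h2 => ?_⟩
  · by_cases hi : i ≤ j
    · simpa [hi] using hf.1 i h1 h2
    · simpa [hi] using hg.1 i h1 h2
  · rcases lt_trichotomy i j with hi | hi | hi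
    · have e1 : i ≤ j := by omega
      have e2 : i + 1 ≤ j := by omega
      simpa only [e1, e2, if_true] using hf.2 i h1 h2
    · subst hi
      have e2 : ¬ (i + 1 ≤ i) := by omega
      simpa only [le_refl, e2, if_true, if_false, h] using hg.2 i h1 h2
    · have e1 : ¬ (i ≤ j) := by omega
      have e2 : ¬ (i + 1 ≤ j) := by omega
      simpa only [e1, e2, if_false] using hg.2 i h1 h2

/-- zigzag through a braid; Freese–Valeriote.
Let `I` be a path instance whose constraint relations are preserved by a chain
of `n` Hagemann–Mitschke terms, and let `(s_0, …, s_n; i_1, …, i_n)` be an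
`n`-braid in `I`. Then there is a solution `t` of `I` with
`t (i_1) = s_0 (i_1)` and `t (i_n) = s_n (i_n)`. -/
theorem statement5 {A : Type} (n : ℕ) (hn : 1 ≤ n) (I : PathInstance A)
    (p : ℕ → A → A → A → A) (hp : IsHMChain n p)
    (hB : ∀ k ≤ n, ∀ i, 1 ≤ i → i ≤ I.len → Pres3Set (p k) (I.B i))
    (hE : ∀ k ≤ n, ∀ i, 1 ≤ i → i + 1 ≤ I.len → Pres3Rel (p k) (I.E i))
    (s : ℕ → ℕ → A) (idx : ℕ → ℕ)
    (hbraid : IsBraid I n s idx) :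
    ∃ t : ℕ → A, IsSolution I t ∧
      t (idx 1) = s 0 (idx 1) ∧ t (idx n) = s n (idx n) := by
  obtain ⟨hs, h1, hl, hlt, heq⟩ := hbraid
  obtain ⟨-, hp0, hpn, hpk⟩ := hp
  let T : ℕ → ℕ → A := fun k i => p k (s (k - 1) i) (s k i) (s (min (k + 1) n) i)
  have hT : ∀ k ≤ n, IsSolution I (T k) := by
    intro k hk
    have a := hs (k - 1) (by omega)
    have b := hs k hk
    have c := hs (min (k + 1) n) (by omega)
    exact ⟨fun i u v => hB k hk i u v _ _ _ (a.1 i u v) (b.1 i u v) (c.1 i u v),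
      fun i u v => hE k hk i u v _ _ _ (a.2 i u v) (b.2 i u v) (c.2 i u v)⟩
  have hagree : ∀ k < n, T k (idx (k + 1)) = T (k + 1) (idx (k + 1)) := by
    intro k hk
    have e1 : s (k - 1) (idx (k + 1)) = s k (idx (k + 1)) := by
      rcases Nat.eq_zero_or_pos k with h | h
      · subst h; rfl
      · exact (heq k h hk).2
    have e2 : s (min (k + 1 + 1) n) (idx (k + 1)) = s (k + 1) (idx (k + 1)) := by
      by_cases h : k + 1 + 1 ≤ n
      · rw [min_eq_left h]
        exact (heq (k + 1) (by omega) h).1.symm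
      · rw [show min (k + 1 + 1) n = k + 1 by omega]
    show p k _ _ _ = p (k + 1) _ _ _
    rw [e1, e2, min_eq_left (show k + 1 ≤ n from hk), Nat.add_sub_cancel]
    exact hpk k hk _ _
  have key : ∀ m, 1 ≤ m → m ≤ n → idx 1 ≤ idx m ∧ ∃ u, IsSolution I u ∧
      u (idx 1) = s 0 (idx 1) ∧ ∀ i, idx m ≤ i → u i = T m i := by
    intro m hm
    induction m, hm using Nat.le_induction with
    | base =>
      intro h
      refine ⟨le_rfl, T 1, hT 1 h, ?_, fun _ _ => rfl⟩
      rw [← hagree 0 h]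
      exact hp0 _ _ _
    | succ m hm ih =>
      intro h
      obtain ⟨hle, u, hu, hu1, hu2⟩ := ih (by omega)
      have hl' := hlt m hm h
      have hj : u (idx (m + 1)) = T (m + 1) (idx (m + 1)) := by
        rw [hu2 _ hl'.le, hagree m h]
      refine ⟨by omega, _, hu.glue (hT (m + 1) h) hj, ?_, ?_⟩
      · have e : idx 1 ≤ idx (m + 1) := by omega
        simpa only [e, if_true] using hu1
      · intro i hi
        by_cases e : i ≤ idx (m + 1)
        · have : i = idx (m + 1) := by omega
          subst this
          simpa only [le_refl, if_true] using hj
        · simp only [e, if_false]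
  obtain ⟨-, u, hu, hu1, hu2⟩ := key n hn le_rfl
  refine ⟨u, hu, hu1, ?_⟩
  rw [hu2 _ le_rfl]
  show p n _ _ _ = _
  rw [hpn, min_eq_right (Nat.le_succ n)]

end CSPPaper
end

section
/- Let 𝔸 be a relational structure and let I be an unsatisfiable path instance of CSP(𝔸). Then 𝒫_𝔸^3 derives from I the instance I_λ; I_λ is an unsatisfiable path instance; for every m, any interval of variables of I_λ of length at least 2m+2 contains at least m indices with backward edges; and all constraint relations of I_λ are invariant under all polymorphisms of 𝔸. -/
namespace CSPPaper

/-! ### Connectivity -/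

/-- Connectivity in `Conn(I_{[lo,hi]})`. -/
def conn {A : Type} (I : PathInstance A) (lo hi : ℕ) (p q : ℕ × A) : Prop :=
  Relation.ReflTransGen (fun p q => connAdj I lo hi p q ∨ connAdj I lo hi q p) p q

theorem conn_symm {A : Type} {I : PathInstance A} {lo hi : ℕ} {p q : ℕ × A}
    (h : conn I lo hi p q) : conn I lo hi q p := by
  induction h with
  | refl => exact Relation.ReflTransGen.refl
  | tail _ hs ih => exact Relation.ReflTransGen.head hs.symm ih

theorem conn_trans {A : Type} {I : PathInstance A} {lo hi : ℕ} {p q r : ℕ × A}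
    (h : conn I lo hi p q) (h' : conn I lo hi q r) : conn I lo hi p r :=
  Relation.ReflTransGen.trans h h'

theorem conn_mono {A : Type} {I : PathInstance A} {lo hi lo' hi' : ℕ} {p q : ℕ × A}
    (hlo : lo' ≤ lo) (hhi : hi ≤ hi') (h : conn I lo hi p q) : conn I lo' hi' p q := by
  refine Relation.ReflTransGen.mono ?_ _ _ h
  rintro a b (⟨h1, h2, h3⟩ | ⟨h1, h2, h3⟩)
  · exact Or.inl ⟨hlo.trans h1, h2.trans hhi, h3⟩
  · exact Or.inr ⟨hlo.trans h1, h2.trans hhi, h3⟩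

theorem conn_up {A : Type} {I : PathInstance A} {lo hi k : ℕ} {a b : A}
    (h1 : lo ≤ k) (h2 : k + 1 ≤ hi) (ha : a ∈ I.B k) (hb : b ∈ I.B (k + 1))
    (h : (a, b) ∈ I.E k) : conn I lo hi (k, a) (k + 1, b) :=
  Relation.ReflTransGen.single (Or.inl ⟨h1, h2, rfl, ha, hb, h⟩)

theorem conn_mem {A : Type} {I : PathInstance A} {lo hi : ℕ} {p q : ℕ × A}
    (h : conn I lo hi p q) (hp : p.2 ∈ I.B p.1) : q.2 ∈ I.B q.1 := by
  induction h with
  | refl => exact hp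
  | tail _ h _ =>
    rcases h with h | h
    · exact h.2.2.2.2.1
    · exact h.2.2.2.1

theorem conn_level {A : Type} {I : PathInstance A} {lo hi : ℕ} {p q : ℕ × A}
    (h : conn I lo hi p q) (hp : lo ≤ p.1 ∧ p.1 ≤ hi) : lo ≤ q.1 ∧ q.1 ≤ hi := by
  induction h with
  | refl => exact hp
  | tail _ h _ =>
    rcases h with ⟨h1, h2, h3, _⟩ | ⟨h1, h2, h3, _⟩ <;> omega

/-! ### Derivation -/

/-- Pairs of elements at levels `lo` and `k` connected in `Conn(I_{[lo,hi]})`. -/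
def chainRel {A : Type} (I : PathInstance A) (lo hi k : ℕ) : Set (A × A) :=
  {ab | ab.1 ∈ I.B lo ∧ ab.2 ∈ I.B k ∧ conn I lo hi (lo, ab.1) (k, ab.2)}

/-- The rule starting the derivation of `λ`. -/
def startRule {A : Type} (𝔸 : RelStruct A) (I : PathInstance A) (lo hi : ℕ)
    (hb : (⟨1, unaryRel (I.B lo)⟩ : Σ n : ℕ, Set (Fin n → A)) ∈ 𝔸.basic) : Rule A 𝔸 3 where
  head := ⟨2, ![0, 0], pairRel (chainRel I lo hi lo)⟩
  idb := none
  edb := [⟨1, fun _ => 0, unaryRel (I.B lo)⟩]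
  head_arity := by simp
  idb_arity := by simp
  edb_arity := by simp
  edb_basic := by simpa using hb
  nodup := by simp
  consistent := by
    intro f _ h
    have h0 : f 0 ∈ I.B lo := h _ (List.mem_singleton.2 rfl)
    exact ⟨h0, h0, Relation.ReflTransGen.refl⟩
  mirror := by simp

/-- The rule continuing the derivation of `λ`. -/
def contRule {A : Type} (𝔸 : RelStruct A) (I : PathInstance A) (lo hi k : ℕ)
    (h1 : lo ≤ k) (h2 : k + 1 ≤ hi)
    (hb : (⟨1, unaryRel (I.B k)⟩ : Σ n : ℕ, Set (Fin n → A)) ∈ 𝔸.basic)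
    (hb' : (⟨1, unaryRel (I.B (k + 1))⟩ : Σ n : ℕ, Set (Fin n → A)) ∈ 𝔸.basic)
    (he : (⟨2, pairRel (I.E k)⟩ : Σ n : ℕ, Set (Fin n → A)) ∈ 𝔸.basic) : Rule A 𝔸 3 where
  head := ⟨2, ![0, 2], pairRel (chainRel I lo hi (k + 1))⟩
  idb := some ⟨2, ![0, 1], pairRel (chainRel I lo hi k)⟩
  edb := [⟨1, fun _ => 1, unaryRel (I.B k)⟩, ⟨1, fun _ => 2, unaryRel (I.B (k + 1))⟩,
    ⟨2, ![1, 2], pairRel (I.E k)⟩]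
  head_arity := by simp
  idb_arity := by simp
  edb_arity := by simp
  edb_basic := by
    intro a ha
    simp only [List.mem_cons, List.not_mem_nil, or_false] at ha
    rcases ha with rfl | rfl | rfl
    exacts [hb, hb', he]
  nodup := by
    refine List.Nodup.of_map
      (fun a : Atom A 3 => (a.arity, if h : 0 < a.arity then a.scope ⟨0, h⟩ else 0)) ?_
    simp
  consistent := by
    intro f hi' h
    have g1 : f 1 ∈ I.B k := h ⟨1, fun _ => 1, unaryRel (I.B k)⟩ (by simp)
    have g2 : f 2 ∈ I.B (k + 1) := h ⟨1, fun _ => 2, unaryRel (I.B (k + 1))⟩ (by simp)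
    have g3 : (f 1, f 2) ∈ I.E k := h ⟨2, ![1, 2], pairRel (I.E k)⟩ (by simp)
    have g0 : (f 0, f 1) ∈ chainRel I lo hi k := hi' _ rfl
    exact ⟨g0.1, g2, conn_trans g0.2.2 (conn_up h1 h2 g1 g2 g3)⟩
  mirror := by
    rintro a ha f h0 h
    obtain rfl := Option.some.inj ha
    have g1 : f 1 ∈ I.B k := h ⟨1, fun _ => 1, unaryRel (I.B k)⟩ (by simp)
    have g2 : f 2 ∈ I.B (k + 1) := h ⟨1, fun _ => 2, unaryRel (I.B (k + 1))⟩ (by simp)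
    have g3 : (f 1, f 2) ∈ I.E k := h ⟨2, ![1, 2], pairRel (I.E k)⟩ (by simp)
    have g0 : (f 0, f 2) ∈ chainRel I lo hi (k + 1) := h0
    exact ⟨g0.1, g1, conn_trans g0.2.2 (conn_symm (conn_up h1 h2 g1 g2 g3))⟩

theorem unary_mem {A : Type} {I : PathInstance A} {k : ℕ} (h1 : 1 ≤ k) (h2 : k ≤ I.len) :
    (⟨1, fun _ => k, unaryRel (I.B k)⟩ : Σ n : ℕ, (Fin n → ℕ) × Set (Fin n → A)) ∈
      I.toInstance.constraints := Or.inl ⟨k, h1, h2, rfl⟩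

theorem pair_mem {A : Type} {I : PathInstance A} {k : ℕ} (h1 : 1 ≤ k) (h2 : k + 1 ≤ I.len) :
    (⟨2, ![k, k + 1], pairRel (I.E k)⟩ : Σ n : ℕ, (Fin n → ℕ) × Set (Fin n → A)) ∈
      I.toInstance.constraints := Or.inr ⟨k, h1, h2, rfl⟩

theorem derives_chain {A : Type} (𝔸 : RelStruct A) (I : PathInstance A)
    (hI : IsCSPInstance 𝔸 I.toInstance) (lo hi : ℕ) (hlo : 1 ≤ lo) (hhi : hi ≤ I.len)
    (d : ℕ) (hd : lo + d ≤ hi) :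
    Derives 𝔸 3 I.toInstance ![lo, lo + d] (pairRel (chainRel I lo hi (lo + d))) := by
  induction d with
  | zero =>
    have hm := unary_mem (I := I) hlo (by omega)
    have := Derives.step (𝔸 := 𝔸) (I := I.toInstance) (startRule 𝔸 I lo hi (hI _ hm))
      (fun _ => lo) (by simp [startRule]) (by
        intro a ha
        obtain rfl := List.mem_singleton.1 ha
        exact hm)
    have e : (![lo, lo + 0] : Fin 2 → ℕ) = fun i => (fun _ : Fin 3 => lo) (![0, 0] i) := by
      funext j
      fin_cases j <;> rfl
    rw [e]
    exact this
  | succ d ih =>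
    have ih := ih (by omega)
    have m1 := unary_mem (I := I) (k := lo + d) (by omega) (by omega)
    have m2 := unary_mem (I := I) (k := lo + d + 1) (by omega) (by omega)
    have m3 := pair_mem (I := I) (k := lo + d) (by omega) (by omega)
    have := Derives.step (𝔸 := 𝔸) (I := I.toInstance)
      (contRule 𝔸 I lo hi (lo + d) (by omega) (by omega) (hI _ m1) (hI _ m2) (hI _ m3))
      ![lo, lo + d, lo + d + 1] (by
        intro a ha
        obtain rfl := Option.some.inj ha
        convert ih using 1
        funext j
        fin_cases j <;> rfl) (by
        intro a ha
        have ha' : a ∈ [_, _, _] := ha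
        simp only [List.mem_cons, List.not_mem_nil, or_false] at ha'
        rcases ha' with rfl | rfl | rfl
        · exact m1
        · exact m2
        · convert m3 using 3
          funext j
          fin_cases j <;> rfl)
    have e : (![lo, lo + (d + 1)] : Fin 2 → ℕ) =
        fun i => (![lo, lo + d, lo + d + 1] : Fin 3 → ℕ) (![0, 2] i) := by
      funext j
      fin_cases j <;> rfl
    rw [e]
    exact this

theorem derives_lam {A : Type} (𝔸 : RelStruct A) (I : PathInstance A)
    (hI : IsCSPInstance 𝔸 I.toInstance) (lo hi : ℕ) (hlo : 1 ≤ lo) (hhi : hi ≤ I.len)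
    (h : lo ≤ hi) :
    Derives 𝔸 3 I.toInstance ![lo, hi] (pairRel (lamRel I lo hi)) := by
  obtain ⟨d, rfl⟩ := Nat.exists_eq_add_of_le h
  exact derives_chain 𝔸 I hI lo (lo + d) hlo hhi d le_rfl

/-! ### Invariance of `λ` -/

theorem lam_iff {A : Type} {I : PathInstance A} {lo hi : ℕ} {a b : A} :
    (a, b) ∈ lamRel I lo hi ↔ a ∈ I.B lo ∧ b ∈ I.B hi ∧ conn I lo hi (lo, a) (hi, b) := Iff.rfl

/-- `λ_{lo,h} ∘ E_h`. -/
def relP {A : Type} (I : PathInstance A) (lo h : ℕ) : Set (A × A) :=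
  {ab | ab.2 ∈ I.B (h + 1) ∧ ∃ w, (ab.1, w) ∈ lamRel I lo h ∧ (w, ab.2) ∈ I.E h}

/-- `E_lo ∘ λ_{lo+1,h+1}`. -/
def relQ {A : Type} (I : PathInstance A) (lo h : ℕ) : Set (A × A) :=
  {ab | ab.1 ∈ I.B lo ∧ ∃ c, (ab.1, c) ∈ I.E lo ∧ (c, ab.2) ∈ lamRel I (lo + 1) (h + 1)}

def setZ {A : Type} (I : PathInstance A) (lo h : ℕ) : Set A :=
  {z | ∃ y, (y, z) ∈ relP I lo h ∧ (y, z) ∈ relQ I lo h}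

def relR {A : Type} (I : PathInstance A) (lo h : ℕ) (z z' : A) : Prop :=
  z ∈ setZ I lo h ∧ z' ∈ setZ I lo h ∧ ∃ x, (x, z) ∈ relQ I lo h ∧ (x, z') ∈ relP I lo h

/-- Tops reached from `x`. -/
def topM {A : Type} (I : PathInstance A) (lo h : ℕ) (x z : A) : Prop :=
  z ∈ setZ I lo h ∧
  ∃ z0 ∈ setZ I lo h, (x, z0) ∈ relP I lo h ∧ Relation.ReflTransGen (relR I lo h) z0 z

def goodN {A : Type} (I : PathInstance A) (lo h : ℕ) (x x' : A) : Prop :=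
  x' = x ∨ ∃ z, topM I lo h x z ∧ (x', z) ∈ relQ I lo h

/-- The invariant along a path starting in `(lo, x)`. -/
def pathInv {A : Type} (I : PathInstance A) (lo h : ℕ) (x : A) (p : ℕ × A) : Prop :=
  (∃ x' y, p.1 ≤ h ∧ goodN I lo h x x' ∧ x' ∈ I.B lo ∧ y ∈ I.B lo ∧
      conn I lo h (lo, x') p ∧ conn I lo h (lo, y) p ∧
      (p = (lo, y) ∨ (lo + 1 ≤ p.1 ∧ ∃ c ∈ I.B (lo + 1), (y, c) ∈ I.E lo ∧
        conn I (lo + 1) (h + 1) (lo + 1, c) p))) ∨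
  (∃ z, lo + 1 ≤ p.1 ∧ topM I lo h x z ∧ z ∈ I.B (h + 1) ∧
      conn I (lo + 1) (h + 1) (h + 1, z) p)

theorem pathInv_step {A : Type} {I : PathInstance A} {lo h : ℕ} (hlh : lo ≤ h) {x : A}
    {p q : ℕ × A} (hp : pathInv I lo h x p)
    (hpq : connAdj I lo (h + 1) p q ∨ connAdj I lo (h + 1) q p) : pathInv I lo h x q := by
  obtain ⟨k, a⟩ := p
  obtain ⟨l, b⟩ := q
  rcases hp with ⟨x', y, hk, hg, hx', hy, c1, c2, hlast⟩ | ⟨z, hk, hz, hzB, hc⟩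
  · rcases hpq with ⟨h1, h2, h3, h4, h5, h6⟩ | ⟨h1, h2, h3, h4, h5, h6⟩
    · -- upwards
      dsimp only at h1 h2 h3 h4 h5 h6 hk
      subst h3
      by_cases hkh : k = h
      · subst hkh
        have hPy : (y, b) ∈ relP I lo k := ⟨h5, a, ⟨hy, h4, c2⟩, h6⟩
        have hPx : (x', b) ∈ relP I lo k := ⟨h5, a, ⟨hx', h4, c1⟩, h6⟩
        have hQy : (y, b) ∈ relQ I lo k := by
          rcases hlast with e | ⟨g1, c, hcB, hyc, hcc⟩
          · obtain ⟨rfl, rfl⟩ := Prod.mk.inj e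
            exact ⟨hy, b, h6, h5, h5, Relation.ReflTransGen.refl⟩
          · exact ⟨hy, c, hyc, hcB, h5, conn_trans hcc (conn_up g1 le_rfl h4 h5 h6)⟩
        have hbZ : b ∈ setZ I lo k := ⟨y, hPy, hQy⟩
        refine Or.inr ⟨b, by simpa using h1, ?_, h5, Relation.ReflTransGen.refl⟩
        refine ⟨hbZ, ?_⟩
        rcases hg with rfl | ⟨z, ⟨hzZ, z0, hz0, hxz0, hr⟩, hq⟩
        · exact ⟨b, hbZ, hPx, Relation.ReflTransGen.refl⟩
        · exact ⟨z0, hz0, hxz0, hr.tail ⟨hzZ, hbZ, x', hq, hPx⟩⟩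
      · have hk' : k + 1 ≤ h := by omega
        have st := conn_up (lo := lo) (hi := h) h1 hk' h4 h5 h6
        refine Or.inl ⟨x', y, hk', hg, hx', hy, conn_trans c1 st, conn_trans c2 st, ?_⟩
        refine Or.inr ⟨by simpa using h1, ?_⟩
        rcases hlast with e | ⟨g1, c, hcB, hyc, hcc⟩
        · obtain ⟨rfl, rfl⟩ := Prod.mk.inj e
          exact ⟨b, h5, h6, Relation.ReflTransGen.refl⟩
        · exact ⟨c, hcB, hyc, conn_trans hcc (conn_up g1 (by omega) h4 h5 h6)⟩
    · -- downwards
      dsimp only at h1 h2 h3 h4 h5 h6 hk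
      subst h3
      have st := conn_symm (conn_up (lo := lo) (hi := h) h1 hk h4 h5 h6)
      by_cases hl : l = lo
      · subst hl
        exact Or.inl ⟨x', b, by dsimp only; omega, hg, hx', h4, conn_trans c1 st,
          Relation.ReflTransGen.refl, Or.inl rfl⟩
      · refine Or.inl ⟨x', y, by dsimp only; omega, hg, hx', hy, conn_trans c1 st,
          conn_trans c2 st, Or.inr ⟨by dsimp only; omega, ?_⟩⟩
        rcases hlast with e | ⟨g1, c, hcB, hyc, hcc⟩
        · have := (Prod.mk.inj e).1
          omega
        · exact ⟨c, hcB, hyc, conn_trans hcc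
            (conn_symm (conn_up (by omega) (by omega) h4 h5 h6))⟩
  · rcases hpq with ⟨h1, h2, h3, h4, h5, h6⟩ | ⟨h1, h2, h3, h4, h5, h6⟩
    · dsimp only at h1 h2 h3 h4 h5 h6 hk
      subst h3
      exact Or.inr ⟨z, by dsimp only; omega, hz, hzB,
        conn_trans hc (conn_up hk h2 h4 h5 h6)⟩
    · dsimp only at h1 h2 h3 h4 h5 h6 hk
      subst h3
      by_cases hl : l = lo
      · subst hl
        refine Or.inl ⟨b, b, hlh, Or.inr ⟨z, hz, h4, a, h6, h5, hzB, conn_symm hc⟩, h4, h4,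
          Relation.ReflTransGen.refl, Relation.ReflTransGen.refl, Or.inl rfl⟩
      · exact Or.inr ⟨z, by dsimp only; omega, hz, hzB,
          conn_trans hc (conn_symm (conn_up (by omega) h2 h4 h5 h6))⟩

theorem lam_decomp {A : Type} {I : PathInstance A} {lo h : ℕ} (hlh : lo ≤ h) {x z : A}
    (hxz : (x, z) ∈ lamRel I lo (h + 1)) :
    ∃ z0 ∈ setZ I lo h, ∃ z1 ∈ setZ I lo h, ∃ y, (x, z0) ∈ relP I lo h ∧
      Relation.ReflTransGen (relR I lo h) z0 z1 ∧ (y, z1) ∈ relQ I lo h ∧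
      (y, z) ∈ relQ I lo h := by
  obtain ⟨hx, hz, hc⟩ := lam_iff.1 hxz
  have key : ∀ p, conn I lo (h + 1) (lo, x) p → pathInv I lo h x p := by
    intro p hp
    induction hp with
    | refl =>
      exact Or.inl ⟨x, x, hlh, Or.inl rfl, hx, hx, Relation.ReflTransGen.refl,
        Relation.ReflTransGen.refl, Or.inl rfl⟩
    | tail _ hs ih => exact pathInv_step hlh ih hs
  rcases key _ hc with ⟨x', y, hk, _⟩ | ⟨z1, hk, ⟨hz1, z0, hz0, hP, hr⟩, hzB, hcc⟩
  · dsimp only at hk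
    omega
  · obtain ⟨y, _, hQ⟩ := id hz1
    obtain ⟨hy, c, hyc, hcB, _, hc1⟩ := id hQ
    exact ⟨z0, hz0, z1, hz1, y, hP, hr, hQ, hy, c, hyc, hcB, hz, conn_trans hc1 hcc⟩

theorem relP_conn {A : Type} {I : PathInstance A} {lo h : ℕ} (hlh : lo ≤ h) {x z : A}
    (hP : (x, z) ∈ relP I lo h) : x ∈ I.B lo ∧ z ∈ I.B (h + 1) ∧
      conn I lo (h + 1) (lo, x) (h + 1, z) := by
  obtain ⟨hz, w, ⟨hx, hw, hc⟩, he⟩ := hP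
  exact ⟨hx, hz, conn_trans (conn_mono le_rfl (Nat.le_succ _) hc)
    (conn_up hlh le_rfl hw hz he)⟩

theorem relQ_conn {A : Type} {I : PathInstance A} {lo h : ℕ} (hlh : lo ≤ h) {x z : A}
    (hQ : (x, z) ∈ relQ I lo h) : x ∈ I.B lo ∧ z ∈ I.B (h + 1) ∧
      conn I lo (h + 1) (lo, x) (h + 1, z) := by
  obtain ⟨hx, c, he, hc, hz, hcc⟩ := hQ
  exact ⟨hx, hz, conn_trans (conn_up le_rfl (by omega) hx hc he)
    (conn_mono (Nat.le_succ _) le_rfl hcc)⟩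

theorem lam_recomp {A : Type} {I : PathInstance A} {lo h : ℕ} (hlh : lo ≤ h) {x z z0 z1 y : A}
    (hP : (x, z0) ∈ relP I lo h) (hr : Relation.ReflTransGen (relR I lo h) z0 z1)
    (hQ : (y, z1) ∈ relQ I lo h) (hQ' : (y, z) ∈ relQ I lo h) :
    (x, z) ∈ lamRel I lo (h + 1) := by
  have a1 := relP_conn hlh hP
  have a2 := relQ_conn hlh hQ
  have a3 := relQ_conn hlh hQ'
  refine ⟨a1.1, a3.2.1, conn_trans a1.2.2 (conn_trans ?_
    (conn_trans (conn_symm a2.2.2) a3.2.2))⟩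
  clear hQ hQ' a2 a3
  induction hr with
  | refl => exact Relation.ReflTransGen.refl
  | tail _ hs ih =>
    obtain ⟨_, _, u, hu, hu'⟩ := hs
    exact conn_trans ih (conn_trans (conn_symm (relQ_conn hlh hu).2.2) (relP_conn hlh hu').2.2)

/-- One-coordinate-at-a-time transitive closure. -/
theorem rtg_pres {A : Type} {q : ℕ} (t : (Fin q → A) → A) (S : A → A → Prop)
    (Z : Set A) (hZ : ∀ x ∈ Z, S x x) (hS : ∀ x y, S x y → y ∈ Z)
    (hpres : ∀ x y : Fin q → A, (∀ j, S (x j) (y j)) → S (t x) (t y))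
    (x y : Fin q → A) (hx : ∀ j, x j ∈ Z) (h : ∀ j, Relation.ReflTransGen S (x j) (y j)) :
    Relation.ReflTransGen S (t x) (t y) := by
  classical
  have one : ∀ (u : Fin q → A) (j : Fin q) (w : A), (∀ i, u i ∈ Z) →
      Relation.ReflTransGen S (u j) w →
      w ∈ Z ∧ Relation.ReflTransGen S (t u) (t (Function.update u j w)) := by
    intro u j w hu hw
    induction hw with
    | refl => exact ⟨hu j, by rw [Function.update_eq_self]⟩
    | @tail b c _ hs ih =>
      refine ⟨hS _ _ hs, ih.2.tail (hpres _ _ fun i => ?_)⟩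
      by_cases hij : i = j
      · subst hij
        simpa using hs
      · simpa [hij] using hZ _ (hu i)
  have many : ∀ s : Finset (Fin q), (∀ i, (s.piecewise y x) i ∈ Z) ∧
      Relation.ReflTransGen S (t x) (t (s.piecewise y x)) := by
    intro s
    induction s using Finset.induction_on with
    | empty => simpa using ⟨hx, Relation.ReflTransGen.refl⟩
    | insert j s hj ih =>
      rw [Finset.piecewise_insert]
      obtain ⟨o1, o2⟩ := one (s.piecewise y x) j (y j) ih.1 (by
        rw [Finset.piecewise_eq_of_notMem _ _ _ hj]; exact h j)
      refine ⟨fun i => ?_, ih.2.trans o2⟩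
      by_cases hij : i = j
      · subst hij
        simpa using o1
      · simpa [hij] using ih.1 i
  simpa using (many Finset.univ).2

theorem lam_pres {A : Type} {q : ℕ} (t : (Fin q → A) → A) (I : PathInstance A) (d : ℕ) :
    ∀ lo, (∀ k, lo ≤ k → k ≤ lo + d → PresOpSet t (I.B k)) →
      (∀ k, lo ≤ k → k + 1 ≤ lo + d → PresOpRel t (I.E k)) →
      PresOpRel t (lamRel I lo (lo + d)) := by
  induction d with
  | zero =>
    intro lo hB _ x y hxy
    have e : y = x := by
      funext j
      obtain ⟨_, _, hc⟩ := lam_iff.1 (hxy j)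
      rcases Relation.ReflTransGen.cases_head hc with h | ⟨c, h, _⟩
      · exact (Prod.mk.inj h).2.symm
      · rcases h with ⟨h1, h2, h3, _⟩ | ⟨h1, h2, h3, _⟩ <;> dsimp only at h1 h2 h3 <;> omega
    subst e
    have := hB lo le_rfl le_rfl y (fun j => (hxy j).1)
    exact ⟨this, this, Relation.ReflTransGen.refl⟩
  | succ d ih =>
    intro lo hB hE
    have hlh : lo ≤ lo + d := Nat.le_add_right _ _
    have L1 : PresOpRel t (lamRel I lo (lo + d)) :=
      ih lo (fun k h1 h2 => hB k h1 (by omega)) (fun k h1 h2 => hE k h1 (by omega))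
    have L2 : PresOpRel t (lamRel I (lo + 1) (lo + d + 1)) := by
      have := ih (lo + 1) (fun k h1 h2 => hB k (by omega) (by omega))
        (fun k h1 h2 => hE k (by omega) (by omega))
      rwa [Nat.add_right_comm] at this
    have hP : PresOpRel t (relP I lo (lo + d)) := by
      intro x y hxy
      choose hy w hw he using hxy
      exact ⟨hB _ (by omega) (by omega) y hy, t w, L1 x w hw,
        hE _ (by omega) (by omega) w y he⟩
    have hQ : PresOpRel t (relQ I lo (lo + d)) := by
      intro x y hxy
      choose hx c he hc using hxy
      exact ⟨hB _ le_rfl (by omega) x hx, t c, hE _ le_rfl (by omega) x c he, L2 c y hc⟩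
    have hZ : PresOpSet t (setZ I lo (lo + d)) := by
      intro z hz
      choose y h1 h2 using hz
      exact ⟨t y, hP y z h1, hQ y z h2⟩
    intro x z hxz
    choose z0 hz0 z1 hz1 y h1 h2 h3 h4 using fun j => lam_decomp hlh (hxz j)
    refine lam_recomp hlh (hP x z0 h1) ?_ (hQ y z1 h3) (hQ y z h4)
    refine rtg_pres t (relR I lo (lo + d)) (setZ I lo (lo + d)) ?_ ?_ ?_ z0 z1 hz0 h2
    · rintro u hu
      obtain ⟨v, v1, v2⟩ := id hu
      exact ⟨hu, hu, v, v2, v1⟩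
    · rintro u v h
      exact h.2.1
    · intro u v huv
      choose g1 g2 w g3 g4 using huv
      exact ⟨hZ u g1, hZ v g2, t w, hQ w u g3, hP w v g4⟩

/-! ### Enumeration of the variables -/

theorem mem_lamVars {A : Type} {I : PathInstance A} {v : ℕ} :
    v ∈ lamVars I ↔ (1 ≤ v ∧ v ≤ I.len) ∧
      (v = 1 ∨ v = I.len ∨ BackwardAt I v ∨ (2 ≤ v ∧ BackwardAt I (v - 1))) := by
  simp [lamVars]

theorem lamEnum_eq {A : Type} (I : PathInstance A) {t : ℕ}
    (h1 : 1 ≤ t) (h2 : t ≤ (lamVars I).card) :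
    lamEnum I t = ((lamVars I).sort (· ≤ ·))[t - 1]'(by rw [Finset.length_sort]; omega) := by
  unfold lamEnum
  rw [List.getD_eq_getElem]

theorem lamEnum_mem {A : Type} (I : PathInstance A) {t : ℕ}
    (h1 : 1 ≤ t) (h2 : t ≤ (lamVars I).card) : lamEnum I t ∈ lamVars I := by
  rw [lamEnum_eq I h1 h2, ← Finset.mem_sort (· ≤ ·)]
  exact List.getElem_mem _

theorem lamEnum_lt {A : Type} (I : PathInstance A) {s t : ℕ}
    (h1 : 1 ≤ s) (hst : s < t) (h2 : t ≤ (lamVars I).card) : lamEnum I s < lamEnum I t := by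
  rw [lamEnum_eq I h1 (by omega), lamEnum_eq I (by omega) h2]
  exact (Finset.sortedLT_sort (lamVars I)).strictMono_get (a := ⟨s - 1, by simp; omega⟩)
    (b := ⟨t - 1, by simp; omega⟩) (by simp; omega)

theorem lamEnum_surj {A : Type} (I : PathInstance A) {v : ℕ} (hv : v ∈ lamVars I) :
    ∃ t, 1 ≤ t ∧ t ≤ (lamVars I).card ∧ lamEnum I t = v := by
  rw [← Finset.mem_sort (· ≤ ·)] at hv
  obtain ⟨n, hn, e⟩ := List.getElem_of_mem hv
  rw [Finset.length_sort] at hn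
  exact ⟨n + 1, by omega, by omega, by rw [lamEnum_eq I (by omega) (by omega)]; simpa using e⟩

theorem lamEnum_gap {A : Type} (I : PathInstance A) {t v : ℕ} (h1 : 1 ≤ t)
    (h2 : t + 1 ≤ (lamVars I).card) (hv : v ∈ lamVars I) (hl : lamEnum I t < v) :
    lamEnum I (t + 1) ≤ v := by
  obtain ⟨s, hs1, hs2, rfl⟩ := lamEnum_surj I hv
  rcases Nat.lt_or_ge t s with h | h
  · rcases Nat.lt_or_ge (t + 1) s with h' | h'
    · exact (lamEnum_lt I (by omega) h' hs2).le
    · have : s = t + 1 := by omega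
      rw [this]
  · rcases Nat.lt_or_ge s t with h' | h'
    · have := lamEnum_lt I hs1 h' (by omega)
      omega
    · have : s = t := by omega
      subst this
      omega

theorem one_mem {A : Type} {I : PathInstance A} (hlen : 1 ≤ I.len) : 1 ∈ lamVars I :=
  mem_lamVars.2 ⟨⟨le_rfl, hlen⟩, Or.inl rfl⟩

theorem len_mem {A : Type} {I : PathInstance A} (hlen : 1 ≤ I.len) : I.len ∈ lamVars I :=
  mem_lamVars.2 ⟨⟨hlen, le_rfl⟩, Or.inr (Or.inl rfl)⟩

theorem card_pos {A : Type} {I : PathInstance A} (hlen : 1 ≤ I.len) : 1 ≤ (lamVars I).card :=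
  Finset.card_pos.2 ⟨1, one_mem hlen⟩

theorem lamEnum_one {A : Type} {I : PathInstance A} (hlen : 1 ≤ I.len) : lamEnum I 1 = 1 := by
  obtain ⟨s, hs1, hs2, e⟩ := lamEnum_surj I (one_mem hlen)
  have h := (mem_lamVars.1 (lamEnum_mem I le_rfl (card_pos hlen))).1.1
  rcases Nat.lt_or_ge 1 s with h' | h'
  · have := lamEnum_lt I le_rfl h' hs2
    omega
  · have : s = 1 := by omega
    rwa [this] at e

theorem lamEnum_last {A : Type} {I : PathInstance A} (hlen : 1 ≤ I.len) :
    lamEnum I (lamVars I).card = I.len := by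
  obtain ⟨s, hs1, hs2, e⟩ := lamEnum_surj I (len_mem hlen)
  have h := (mem_lamVars.1 (lamEnum_mem I (card_pos hlen) le_rfl)).1.2
  rcases Nat.lt_or_ge s (lamVars I).card with h' | h'
  · have := lamEnum_lt I hs1 h' le_rfl
    omega
  · have : s = (lamVars I).card := by omega
    rwa [this] at e

/-! ### Reachability -/

theorem reach_succ {A : Type} {I : PathInstance A} {k : ℕ} (hk : 1 ≤ k) {b : A} :
    b ∈ reachSet I (k + 1) ↔ b ∈ I.B (k + 1) ∧ ∃ c ∈ reachSet I k, (c, b) ∈ I.E k := by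
  obtain ⟨k, rfl⟩ := Nat.exists_eq_add_of_le' hk
  exact Iff.rfl

theorem reach_sub {A : Type} {I : PathInstance A} {k : ℕ} (hk : 1 ≤ k) {b : A}
    (h : b ∈ reachSet I k) : b ∈ I.B k := by
  obtain ⟨k, rfl⟩ := Nat.exists_eq_add_of_le' hk
  cases k with
  | zero => exact h
  | succ k => exact h.1

theorem conn_reach {A : Type} {I : PathInstance A} {lo hi : ℕ} (hlo : 1 ≤ lo)
    (hhi : hi ≤ I.len) (hnb : ∀ i, lo ≤ i → i + 1 ≤ hi → ¬ BackwardAt I i) {p q : ℕ × A}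
    (h : conn I lo hi p q) (hp : p.2 ∈ reachSet I p.1) : q.2 ∈ reachSet I q.1 := by
  induction h with
  | refl => exact hp
  | @tail u v _ hs ih =>
    obtain ⟨k, a⟩ := u
    obtain ⟨l, b⟩ := v
    rcases hs with ⟨h1, h2, h3, h4, h5, h6⟩ | ⟨h1, h2, h3, h4, h5, h6⟩
    · dsimp only at *
      subst h3
      exact (reach_succ (by omega)).2 ⟨h5, a, ih, h6⟩
    · dsimp only at *
      subst h3
      by_contra hb
      exact hnb l h1 h2 ⟨by omega, by omega, b, a, h6, h4, hb, ih⟩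

theorem reach_back {A : Type} {I : PathInstance A} {lo : ℕ} (hlo : 1 ≤ lo) (d : ℕ) :
    ∀ b ∈ reachSet I (lo + d), ∃ c ∈ reachSet I lo, conn I lo (lo + d) (lo, c) (lo + d, b) := by
  induction d with
  | zero => exact fun b hb => ⟨b, hb, Relation.ReflTransGen.refl⟩
  | succ d ih =>
    intro b hb
    obtain ⟨hbB, a, ha, he⟩ := (reach_succ (k := lo + d) (by omega)).1 hb
    obtain ⟨c, hc, hcc⟩ := ih a ha
    exact ⟨c, hc, conn_trans (conn_mono le_rfl (Nat.le_succ _) hcc)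
      (conn_up (Nat.le_add_right _ _) le_rfl (reach_sub (by omega) ha) hbB he)⟩

theorem no_backward_gap {A : Type} {I : PathInstance A} {t : ℕ} (h1 : 1 ≤ t)
    (h2 : t + 1 ≤ (lamVars I).card) (hne : lamEnum I (t + 1) ≠ lamEnum I t + 1) (i : ℕ)
    (hi : lamEnum I t ≤ i) (hi' : i + 1 ≤ lamEnum I (t + 1)) : ¬ BackwardAt I i := by
  intro hb
  have m1 : i ∈ lamVars I := mem_lamVars.2
    ⟨⟨hb.1, by have := hb.2.1; omega⟩, Or.inr (Or.inr (Or.inl hb))⟩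
  have m2 : i + 1 ∈ lamVars I := mem_lamVars.2
    ⟨⟨by omega, hb.2.1⟩, Or.inr (Or.inr (Or.inr ⟨by have := hb.1; omega, by simpa using hb⟩))⟩
  have g2 := lamEnum_gap I h1 h2 m2 (by omega)
  rcases Nat.lt_or_ge (lamEnum I t) i with h | h
  · have := lamEnum_gap I h1 h2 m1 h
    omega
  · omega

theorem reach_lam {A : Type} {I : PathInstance A} (hlen : 1 ≤ I.len) (t : ℕ) (h1 : 1 ≤ t)
    (h2 : t ≤ (lamVars I).card) : reachSet (lamInst I) t = reachSet I (lamEnum I t) := by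
  induction t, h1 using Nat.le_induction with
  | base =>
    rw [lamEnum_one hlen]
    change I.B (lamEnum I 1) = I.B 1
    rw [lamEnum_one hlen]
  | succ t h1 ih =>
    have ih := ih (by omega)
    have b1 := (mem_lamVars.1 (lamEnum_mem I h1 (by omega : t ≤ _))).1
    have b2 := (mem_lamVars.1 (lamEnum_mem I (by omega) h2)).1
    have lt := lamEnum_lt I h1 (Nat.lt_succ_self t) h2
    ext b
    rw [reach_succ h1, ih]
    by_cases hc : lamEnum I (t + 1) = lamEnum I t + 1
    · have e : (lamInst I).E t = I.E (lamEnum I t) := if_pos hc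
      have e' : (lamInst I).B (t + 1) = I.B (lamEnum I t + 1) := by
        rw [← hc]; rfl
      rw [e, e', hc, reach_succ b1.1]
    · have e : (lamInst I).E t = lamRel I (lamEnum I t) (lamEnum I (t + 1)) := if_neg hc
      rw [e]
      constructor
      · rintro ⟨_, c, hcr, _, _, hcc⟩
        exact conn_reach b1.1 b2.2 (no_backward_gap h1 h2 hc) hcc hcr
      · intro hb
        refine ⟨reach_sub b2.1 hb, ?_⟩
        obtain ⟨d, hd⟩ := Nat.exists_eq_add_of_lt lt
        rw [add_assoc] at hd
        rw [hd] at hb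
        obtain ⟨c, hcr, hcc⟩ := reach_back b1.1 _ b hb
        rw [← hd] at hcc hb
        exact ⟨c, hcr, reach_sub b1.1 hcr, reach_sub b2.1 hb, hcc⟩

theorem sol_reach {A : Type} {I : PathInstance A} {s : ℕ → A} (hs : IsSolution I s) (t : ℕ)
    (h1 : 1 ≤ t) (h2 : t ≤ I.len) : s t ∈ reachSet I t := by
  induction t, h1 using Nat.le_induction with
  | base => exact hs.1 1 le_rfl h2
  | succ t h1 ih =>
    exact (reach_succ h1).2 ⟨hs.1 _ (by omega) h2, s t, ih (by omega), hs.2 t h1 h2⟩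

theorem reach_sol {A : Type} {I : PathInstance A} (t : ℕ) (h1 : 1 ≤ t) :
    ∀ b ∈ reachSet I t, ∃ s : ℕ → A, s t = b ∧ IsSolutionOn I 1 t s := by
  induction t, h1 using Nat.le_induction with
  | base =>
    intro b hb
    refine ⟨fun _ => b, rfl, fun i h1 h2 => ?_, fun i h1 h2 => by omega⟩
    obtain rfl : i = 1 := by omega
    exact hb
  | succ t h1 ih =>
    intro b hb
    obtain ⟨hbB, c, hc, he⟩ := (reach_succ h1).1 hb
    obtain ⟨s, rfl, g1, g2⟩ := ih c hc
    refine ⟨Function.update s (t + 1) b, by simp, fun i i1 i2 => ?_, fun i i1 i2 => ?_⟩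
    · by_cases h : i = t + 1
      · subst h
        simpa using hbB
      · simpa [h] using g1 i i1 (by omega)
    · by_cases h : i = t
      · subst h
        simpa using he
      · have h' : i ≠ t + 1 := by omega
        simpa [h, h'] using g2 i i1 (by omega)

theorem lam_backward {A : Type} {I : PathInstance A} (hlen : 1 ≤ I.len) {t : ℕ} (h1 : 1 ≤ t)
    (h2 : t + 1 ≤ (lamVars I).card) (hb : BackwardAt I (lamEnum I t)) :
    BackwardAt (lamInst I) t := by
  have lt := lamEnum_lt I h1 (Nat.lt_succ_self t) h2
  have hc : lamEnum I (t + 1) = lamEnum I t + 1 := by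
    by_contra hc
    exact no_backward_gap h1 h2 hc _ le_rfl lt hb
  obtain ⟨_, _, b, c, he, hbB, hbr, hcr⟩ := hb
  refine ⟨h1, h2, b, c, ?_, hbB, ?_, ?_⟩
  · have e : (lamInst I).E t = I.E (lamEnum I t) := if_pos hc
    rwa [e]
  · rwa [reach_lam hlen t h1 (by omega)]
  · rwa [reach_lam hlen (t + 1) (by omega) h2, hc]

theorem lam_backward_two {A : Type} {I : PathInstance A} (hlen : 1 ≤ I.len) {t : ℕ} (h1 : 1 ≤ t)
    (h2 : t + 2 ≤ (lamVars I).card) :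
    BackwardAt (lamInst I) t ∨ BackwardAt (lamInst I) (t + 1) := by
  have l1 : lamEnum I t < lamEnum I (t + 1) := lamEnum_lt I h1 (Nat.lt_succ_self t) (by omega)
  have l2 : lamEnum I (t + 1) < lamEnum I (t + 2) := lamEnum_lt I (by omega : 1 ≤ t + 1) (Nat.lt_succ_self (t + 1)) h2
  have b1 := (mem_lamVars.1 (lamEnum_mem I h1 (by omega : t ≤ _))).1
  have b3 := (mem_lamVars.1 (lamEnum_mem I (by omega : 1 ≤ t + 2) h2)).1
  obtain ⟨_, h | h | h | ⟨h, hb⟩⟩ :=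
    mem_lamVars.1 (lamEnum_mem I (by omega : 1 ≤ t + 1) (by omega : t + 1 ≤ _))
  · omega
  · have : lamEnum I (t + 1) < lamEnum I (t + 2) := l2
    omega
  · exact Or.inr (lam_backward hlen (by omega) h2 h)
  · left
    have m : lamEnum I (t + 1) - 1 ∈ lamVars I := mem_lamVars.2
      ⟨⟨hb.1, by have := hb.2.1; omega⟩, Or.inr (Or.inr (Or.inl hb))⟩
    have e : lamEnum I (t + 1) - 1 = lamEnum I t := by
      rcases Nat.lt_or_ge (lamEnum I t) (lamEnum I (t + 1) - 1) with h' | h'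
      · have := lamEnum_gap I h1 (by omega) m h'
        omega
      · have : lamEnum I t < lamEnum I (t + 1) := l1
        omega
    rw [e] at hb
    exact lam_backward hlen h1 (by omega) hb

theorem count_pairs (P : ℕ → Prop) (m a b : ℕ) (hab : a + 2 * m + 1 ≤ b)
    (h : ∀ j, a ≤ j → j + 2 ≤ b → P j ∨ P (j + 1)) :
    m ≤ {j | a ≤ j ∧ j < b ∧ P j}.ncard := by
  classical
  have hfin : {j | a ≤ j ∧ j < b ∧ P j}.Finite :=
    (Set.finite_Iio b).subset fun j hj => hj.2.1
  let f : ℕ → ℕ := fun k => if P (a + 2 * k) then a + 2 * k else a + 2 * k + 1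
  have hf : ∀ k, f k = a + 2 * k ∨ f k = a + 2 * k + 1 := by
    intro k
    by_cases hk : P (a + 2 * k) <;> simp [f, hk]
  have hsub : ((Finset.range m).image f : Set ℕ) ⊆ {j | a ≤ j ∧ j < b ∧ P j} := by
    intro j hj
    simp only [Finset.coe_image, Set.mem_image, Finset.coe_range, Set.mem_Iio] at hj
    obtain ⟨k, hk, rfl⟩ := hj
    have := hf k
    refine ⟨by omega, by omega, ?_⟩
    by_cases hP : P (a + 2 * k)
    · simpa [f, hP] using hP
    · simpa [f, hP] using (h (a + 2 * k) (by omega) (by omega)).resolve_left hP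
  have hcard : ((Finset.range m).image f).card = m := by
    rw [Finset.card_image_of_injective, Finset.card_range]
    intro k l hkl
    have := hf k
    have := hf l
    omega
  calc m = (((Finset.range m).image f : Finset ℕ) : Set ℕ).ncard := by
        rw [Set.ncard_coe_finset, hcard]
    _ ≤ _ := Set.ncard_le_ncard hsub hfin

/-- the instance `I_λ`.
Let `I` be an unsatisfiable path instance of `CSP(𝔸)`. Then `𝒫_𝔸^3` derives
from `I` the instance `I_λ`; `I_λ` is an unsatisfiable path instance; for
every `m`, any interval of variables of `I_λ` of length at least `2m+2`
contains at least `m` indices with backward edges; and all constraint relations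
of `I_λ` are invariant under all polymorphisms of `𝔸`. -/
theorem statement12 {A : Type} [Finite A] (𝔸 : RelStruct A) (I : PathInstance A)
    (hI : IsCSPInstance 𝔸 I.toInstance)
    (hlen : 1 ≤ I.len)
    (hunsat : ¬∃ f : ℕ → A, IsSolution I f) :
    ((∀ t, 1 ≤ t → t ≤ (lamInst I).len →
        Derives 𝔸 3 I.toInstance (fun _ : Fin 1 => lamEnum I t)
          (unaryRel ((lamInst I).B t))) ∧
     (∀ t, 1 ≤ t → t + 1 ≤ (lamInst I).len →
        Derives 𝔸 3 I.toInstance ![lamEnum I t, lamEnum I (t + 1)]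
          (pairRel ((lamInst I).E t)))) ∧
    (¬∃ s : ℕ → A, IsSolution (lamInst I) s) ∧
    (∀ m a b : ℕ, 1 ≤ a → b ≤ (lamInst I).len → a + 2 * m + 1 ≤ b →
      m ≤ {j | a ≤ j ∧ j < b ∧ BackwardAt (lamInst I) j}.ncard) ∧
    (∀ (q : ℕ) (t : (Fin q → A) → A), IsPolymorphism 𝔸 t →
      (∀ v, 1 ≤ v → v ≤ (lamInst I).len → PresOpSet t ((lamInst I).B v)) ∧
      (∀ v, 1 ≤ v → v + 1 ≤ (lamInst I).len → PresOpRel t ((lamInst I).E v))) := by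
  have bd : ∀ t, 1 ≤ t → t ≤ (lamInst I).len → 1 ≤ lamEnum I t ∧ lamEnum I t ≤ I.len :=
    fun t h1 h2 => (mem_lamVars.1 (lamEnum_mem I h1 h2)).1
  have lt : ∀ t, 1 ≤ t → t + 1 ≤ (lamInst I).len → lamEnum I t < lamEnum I (t + 1) :=
    fun t h1 h2 => lamEnum_lt I h1 (Nat.lt_succ_self t) h2
  refine ⟨⟨fun t h1 h2 => ?_, fun t h1 h2 => ?_⟩, ?_, ?_, ?_⟩
  · exact Derives.base _ _ (unary_mem (bd t h1 h2).1 (bd t h1 h2).2)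
  · have b1 := bd t h1 (by omega)
    have b2 := bd (t + 1) (by omega) h2
    have l := lt t h1 h2
    by_cases hc : lamEnum I (t + 1) = lamEnum I t + 1
    · have e : (lamInst I).E t = I.E (lamEnum I t) := if_pos hc
      rw [e, hc]
      exact Derives.base _ _ (pair_mem b1.1 (by omega))
    · have e : (lamInst I).E t = lamRel I (lamEnum I t) (lamEnum I (t + 1)) := if_neg hc
      rw [e]
      exact derives_lam 𝔸 I hI _ _ b1.1 b2.2 l.le
  · rintro ⟨s, hs⟩
    have h := sol_reach hs (lamVars I).card (card_pos hlen) le_rfl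
    rw [reach_lam hlen _ (card_pos hlen) le_rfl, lamEnum_last hlen] at h
    obtain ⟨s', _, hs'⟩ := reach_sol I.len hlen _ h
    exact hunsat ⟨s', hs'⟩
  · intro m a b ha hb hab
    refine count_pairs _ m a b hab fun j hj hj' => ?_
    exact lam_backward_two hlen (by omega) (le_trans hj' hb)
  · intro q t ht
    have hB : ∀ k, 1 ≤ k → k ≤ I.len → PresOpSet t (I.B k) := by
      intro k h1 h2 x hx
      exact ht _ (hI _ (unary_mem h1 h2)) (fun j _ => x j) hx
    have hE : ∀ k, 1 ≤ k → k + 1 ≤ I.len → PresOpRel t (I.E k) := by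
      intro k h1 h2 x y hxy
      exact ht _ (hI _ (pair_mem h1 h2)) (fun j => ![x j, y j]) hxy
    refine ⟨fun v h1 h2 => hB _ (bd v h1 h2).1 (bd v h1 h2).2, fun v h1 h2 => ?_⟩
    have b1 := bd v h1 (by omega)
    have b2 := bd (v + 1) (by omega) h2
    have l := lt v h1 h2
    by_cases hc : lamEnum I (v + 1) = lamEnum I v + 1
    · have e : (lamInst I).E v = I.E (lamEnum I v) := if_pos hc
      rw [e]
      exact hE _ b1.1 (by omega)
    · have e : (lamInst I).E v = lamRel I (lamEnum I v) (lamEnum I (v + 1)) := if_neg hc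
      rw [e]
      obtain ⟨d, hd⟩ := Nat.exists_eq_add_of_le l.le
      rw [hd]
      exact lam_pres t I d _ (fun k g1 g2 => hB k (by omega) (by omega))
        (fun k g1 g2 => hE k (by omega) (by omega))

end CSPPaper
end

section
/- For each relational structure 𝔸 admitting a chain of n Hagemann–Mitschke terms as polymorphisms, there exists M ∈ ℕ such that whenever I is an unsatisfiable path instance of CSP(𝔸), then 𝒫_𝔸^M(I) ⊢ G. -/
namespace CSPPaper

/-! ### Combinatorial and algebraic core -/

/-- Ramsey for monochromatic triangles. -/
theorem ramsey_aux {κ : Type} [DecidableEq κ] (q : ℕ) : ∃ K : ℕ, ∀ t : Finset κ, t.card ≤ q →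
    ∀ S : Finset ℕ, K < S.card → ∀ c : ℕ → ℕ → κ,
      (∀ i ∈ S, ∀ j ∈ S, i < j → c i j ∈ t) →
      ∃ i ∈ S, ∃ j ∈ S, ∃ k ∈ S, i < j ∧ j < k ∧ c i j = c i k ∧ c i j = c j k := by
  induction q with
  | zero =>
    refine ⟨1, fun t ht S hS c hc => ?_⟩
    have ht0 : t = ∅ := Finset.card_eq_zero.mp (by omega)
    obtain ⟨a, ha, b, hb, hab⟩ := Finset.one_lt_card.mp hS
    rcases lt_or_gt_of_ne hab with h | h
    · have := hc a ha b hb h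
      simp [ht0] at this
    · have := hc b hb a ha h
      simp [ht0] at this
  | succ q ih =>
    obtain ⟨K, hK⟩ := ih
    refine ⟨(q + 1) * K + 1, fun t ht S hS c hc => ?_⟩
    have hne : S.Nonempty := Finset.card_pos.mp (by omega)
    set s := S.min' hne with hs
    have hsS : s ∈ S := Finset.min'_mem _ _
    have hlt : ∀ j ∈ S.erase s, s < j := by
      intro j hj
      rw [Finset.mem_erase] at hj
      exact lt_of_le_of_ne (Finset.min'_le _ _ hj.2) (Ne.symm hj.1)
    have hcard : t.card * K < (S.erase s).card := by
      rw [Finset.card_erase_of_mem hsS]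
      have : t.card * K ≤ (q + 1) * K := Nat.mul_le_mul_right _ ht
      omega
    obtain ⟨y, hy, hyK⟩ := Finset.exists_lt_card_fiber_of_mul_lt_card_of_maps_to
      (f := fun j => c s j) (s := S.erase s) (t := t)
      (fun j hj => hc s hsS j (Finset.mem_of_mem_erase hj) (hlt j hj)) hcard
    set T := (S.erase s).filter (fun j => c s j = y) with hT
    have hTS : ∀ j ∈ T, j ∈ S ∧ s < j ∧ c s j = y := by
      intro j hj
      rw [hT, Finset.mem_filter] at hj
      exact ⟨Finset.mem_of_mem_erase hj.1, hlt j hj.1, hj.2⟩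
    by_cases hex : ∃ i ∈ T, ∃ j ∈ T, i < j ∧ c i j = y
    · obtain ⟨i, hi, j, hj, hij, hcy⟩ := hex
      refine ⟨s, hsS, i, (hTS i hi).1, j, (hTS j hj).1, (hTS i hi).2.1, hij, ?_, ?_⟩
      · rw [(hTS i hi).2.2, (hTS j hj).2.2]
      · rw [(hTS i hi).2.2, hcy]
    · push Not at hex
      have hc' : (t.erase y).card ≤ q := by
        rw [Finset.card_erase_of_mem hy]; omega
      obtain ⟨i, hi, j, hj, k, hk, h⟩ := hK (t.erase y) hc' T hyK c (by
        intro i hi j hj hij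
        rw [Finset.mem_erase]
        exact ⟨hex i hi j hj hij, hc i (hTS i hi).1 j (hTS j hj).1 hij⟩)
      exact ⟨i, (hTS i hi).1, j, (hTS j hj).1, k, (hTS k hk).1, h⟩

theorem ramsey_triangle (κ : Type) [Finite κ] : ∃ K : ℕ, ∀ S : Finset ℕ, K < S.card →
    ∀ c : ℕ → ℕ → κ,
      ∃ i ∈ S, ∃ j ∈ S, ∃ k ∈ S, i < j ∧ j < k ∧ c i j = c i k ∧ c i j = c j k := by
  classical
  have := Fintype.ofFinite κ
  obtain ⟨K, hK⟩ := ramsey_aux (κ := κ) (Finset.univ : Finset κ).card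
  exact ⟨K, fun S hS c => hK Finset.univ le_rfl S hS c (by simp)⟩

/-- A transitive dense relation on a finite set: every edge passes through a loop. -/
theorem exists_loop {A : Type} [Finite A] (R : A → A → Prop)
    (htr : ∀ x y z, R x y → R y z → R x z) (hd : ∀ x z, R x z → ∃ y, R x y ∧ R y z)
    (b c : A) (hbc : R b c) : ∃ z, R z z ∧ R b z ∧ R z c := by
  by_contra hno
  push Not at hno
  let r : A → A → Prop := fun w z => R z w ∧ (R b w ∧ R w c) ∧ (R b z ∧ R z c)
  have : IsTrans A r := ⟨fun x y z h1 h2 => ⟨htr _ _ _ h2.1 h1.1, h1.2.1, h2.2.2⟩⟩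
  have : Std.Irrefl r := ⟨fun x h => hno x h.1 h.2.1.1 h.2.1.2⟩
  have wf : WellFounded r := Finite.wellFounded_of_trans_of_irrefl r
  obtain ⟨z0, h1, h2⟩ := hd b c hbc
  obtain ⟨z, hz, hmin⟩ := wf.has_min {z | R b z ∧ R z c} ⟨z0, h1, h2⟩
  obtain ⟨w, hw1, hw2⟩ := hd z c hz.2
  exact hmin w ⟨htr _ _ _ hz.1 hw1, hw2⟩ ⟨hw1, ⟨htr _ _ _ hz.1 hw1, hw2⟩, hz⟩

theorem key_algebra {A : Type} [Finite A] (n : ℕ) (p : ℕ → A → A → A → A) (hp : IsHMChain n p)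
    (R : A → A → Prop) (G C : Set A)
    (hR : ∀ k ≤ n, ∀ x x' y y' z z', R x x' → R y y' → R z z' → R (p k x y z) (p k x' y' z'))
    (htr : ∀ x y z, R x y → R y z → R x z) (hd : ∀ x z, R x z → ∃ y, R x y ∧ R y z)
    (hG : ∀ x y, R x y → x ∈ G ∧ y ∈ G)
    (hr : ∀ x ∈ G, ∃ y, R x y) (hl : ∀ y ∈ G, ∃ x, R x y)
    (hC : ∀ x y, x ∈ C → R x y → y ∈ C)
    (b c : A) (hb : b ∉ C) (hc : c ∈ C) (hbc : R b c) : False := by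
  obtain ⟨x, y, hxC, hyC, hxx, hyy, hyx⟩ : ∃ x y, x ∈ C ∧ y ∉ C ∧ R x x ∧ R y y ∧ R y x := by
    obtain ⟨z, hz, hbz, hzc⟩ := exists_loop R htr hd b c hbc
    by_cases hzC : z ∈ C
    · obtain ⟨b0, hb0⟩ := hl b (hG b c hbc).1
      obtain ⟨y, hy, hby, hyb⟩ := exists_loop R htr hd b0 b hb0
      exact ⟨z, y, hzC, fun h => hb (hC y b h hyb), hz, hy, htr _ _ _ hyb hbz⟩
    · obtain ⟨c0, hc0⟩ := hr c (hG b c hbc).2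
      obtain ⟨x, hx, hcx, hxc⟩ := exists_loop R htr hd c c0 hc0
      exact ⟨x, z, hC c x hc hcx, hzC, hx, hz, htr _ _ _ hzc hcx⟩
  have key : ∀ k ≤ n, R x (p k x y y) := by
    intro k
    induction k with
    | zero => intro _; rw [hp.2.1]; exact hxx
    | succ k ih =>
      intro hk
      have h1 := ih (by omega)
      have h2 := hR k (by omega) x x y x y y hxx hyx hyy
      rw [hp.2.2.2 k (by omega)] at h2
      exact htr _ _ _ h1 h2
  have := key n le_rfl
  rw [hp.2.2.1] at this
  exact hyC (hC x y hxC this)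

/-! ### Walks -/

/-- `Walk G F i x j y`: a walk from `x` at position `i` to `y` at position `j`. -/
inductive Walk {A : Type} (G : ℕ → Set A) (F : ℕ → Set (A × A)) (i : ℕ) (x : A) : ℕ → A → Prop
  | refl : x ∈ G i → Walk G F i x i x
  | step {j : ℕ} {y z : A} : Walk G F i x j y → (y, z) ∈ F j → z ∈ G (j + 1) →
      Walk G F i x (j + 1) z

section walks
variable {A : Type} {G : ℕ → Set A} {F : ℕ → Set (A × A)}

theorem Walk.le {i j : ℕ} {x y : A} (h : Walk G F i x j y) : i ≤ j := by
  induction h with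
  | refl _ => exact le_rfl
  | step _ _ _ ih => omega

theorem Walk.memL {i j : ℕ} {x y : A} (h : Walk G F i x j y) : x ∈ G i := by
  induction h with
  | refl h => exact h
  | step _ _ _ ih => exact ih

theorem Walk.memR {i j : ℕ} {x y : A} (h : Walk G F i x j y) : y ∈ G j := by
  cases h with
  | refl h => exact h
  | step _ _ h => exact h

theorem Walk.trans {i j k : ℕ} {x y z : A} (h : Walk G F i x j y) (h' : Walk G F j y k z) :
    Walk G F i x k z := by
  induction h' with
  | refl _ => exact h
  | step _ h1 h2 ih => exact ih.step h1 h2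

theorem Walk.split {i j k : ℕ} {x z : A} (h : Walk G F i x k z) (hij : i ≤ j) (hjk : j ≤ k) :
    ∃ y, Walk G F i x j y ∧ Walk G F j y k z := by
  induction h with
  | refl h =>
    obtain rfl : j = i := by omega
    exact ⟨x, .refl h, .refl h⟩
  | @step k y z h h1 h2 ih =>
    by_cases hk : j = k + 1
    · subst hk
      exact ⟨z, h.step h1 h2, .refl h2⟩
    · obtain ⟨w, hw1, hw2⟩ := ih (by omega)
      exact ⟨w, hw1, hw2.step h1 h2⟩

theorem Walk.pred {i j : ℕ} {x z : A} (h : Walk G F i x (j + 1) z) (hij : i ≤ j) :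
    ∃ y, Walk G F i x j y ∧ (y, z) ∈ F j := by
  generalize hk : j + 1 = k at h
  cases h with
  | refl _ => omega
  | @step k' y z h h1 h2 =>
    obtain rfl : j = k' := by omega
    exact ⟨y, h, h1⟩

theorem Walk.self {i : ℕ} {x z : A} (h : Walk G F i x i z) : x = z := by
  generalize hk : i = k at h
  cases h with
  | refl _ => rfl
  | step h _ _ => have := h.le; omega

theorem Walk.pres {i j : ℕ} {q : A → A → A → A} (hij : i ≤ j)
    (hG : ∀ t, i ≤ t → t ≤ j → Pres3Set q (G t))
    (hF : ∀ t, i ≤ t → t < j → Pres3Rel q (F t)) {x x' y y' z z' : A}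
    (h1 : Walk G F i x j x') (h2 : Walk G F i y j y') (h3 : Walk G F i z j z') :
    Walk G F i (q x y z) j (q x' y' z') := by
  induction j, hij using Nat.le_induction generalizing x' y' z' with
  | base =>
    obtain rfl := h1.self
    obtain rfl := h2.self
    obtain rfl := h3.self
    exact .refl (hG i le_rfl le_rfl _ _ _ h1.memL h2.memL h3.memL)
  | succ j hij ih =>
    obtain ⟨a, ha, ha'⟩ := h1.pred hij
    obtain ⟨b, hb, hb'⟩ := h2.pred hij
    obtain ⟨c, hc, hc'⟩ := h3.pred hij
    refine (ih (fun t h h' => hG t h (by omega)) (fun t h h' => hF t h (by omega)) ha hb hc).step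
      (hF j hij (by omega) _ _ _ ha' hb' hc')
      (hG _ (by omega) le_rfl _ _ _ h1.memR h2.memR h3.memR)

/-- Elements at position `j` reachable from position `u`. -/
def Rc (G : ℕ → Set A) (F : ℕ → Set (A × A)) (u j : ℕ) : Set A := {y | ∃ x, Walk G F u x j y}

theorem Rc.sub {u j : ℕ} {y : A} (h : y ∈ Rc G F u j) : y ∈ G j := by
  obtain ⟨x, h⟩ := h; exact h.memR

theorem Rc.self (u : ℕ) : Rc G F u u = G u := by
  ext y
  exact ⟨Rc.sub, fun h => ⟨y, .refl h⟩⟩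

theorem Rc.step {u j : ℕ} {y z : A} (h : y ∈ Rc G F u j) (h1 : (y, z) ∈ F j)
    (h2 : z ∈ G (j + 1)) : z ∈ Rc G F u (j + 1) := by
  obtain ⟨x, h⟩ := h; exact ⟨x, h.step h1 h2⟩

theorem Rc.pred {u j : ℕ} {z : A} (h : z ∈ Rc G F u (j + 1)) (huj : u ≤ j) :
    ∃ y ∈ Rc G F u j, (y, z) ∈ F j := by
  obtain ⟨x, h⟩ := h
  obtain ⟨y, hy, h'⟩ := h.pred huj
  exact ⟨y, ⟨x, hy⟩, h'⟩

theorem Rc.mono {u w j : ℕ} (huw : u ≤ w) (hwj : w ≤ j) : Rc G F u j ⊆ Rc G F w j := by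
  rintro y ⟨x, h⟩
  obtain ⟨z, _, h2⟩ := h.split huw hwj
  exact ⟨z, h2⟩

theorem Rc.eq_prop {u w j k : ℕ} (huw : u ≤ w) (hwj : w ≤ j) (hjk : j ≤ k)
    (h : Rc G F u j = Rc G F w j) : Rc G F u k = Rc G F w k := by
  apply Set.Subset.antisymm (Rc.mono huw (by omega))
  rintro y ⟨x, hx⟩
  obtain ⟨z, h1, h2⟩ := hx.split hwj hjk
  have hz : z ∈ Rc G F u j := by rw [h]; exact ⟨x, h1⟩
  obtain ⟨x', h'⟩ := hz
  exact ⟨x', h'.trans h2⟩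

theorem Rc.pres {u j : ℕ} {q : A → A → A → A} (hij : u ≤ j)
    (hG : ∀ t, u ≤ t → t ≤ j → Pres3Set q (G t))
    (hF : ∀ t, u ≤ t → t < j → Pres3Rel q (F t)) : Pres3Set q (Rc G F u j) := by
  rintro x y z ⟨x', hx⟩ ⟨y', hy⟩ ⟨z', hz⟩
  exact ⟨_, Walk.pres hij hG hF hx hy hz⟩

end walks

/-- In a subdirect path, boundedly many positions carry backward edges. -/
theorem backward_bound (A : Type) [Finite A] : ∃ K : ℕ, ∀ (n : ℕ) (p : ℕ → A → A → A → A),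
    IsHMChain n p → ∀ (G C : ℕ → Set A) (F : ℕ → Set (A × A)) (a b : ℕ),
    (∀ j, a ≤ j → j ≤ b → ∀ k ≤ n, Pres3Set (p k) (G j)) →
    (∀ j, a ≤ j → j < b → ∀ k ≤ n, Pres3Rel (p k) (F j)) →
    (∀ j, a ≤ j → j < b → ∀ x ∈ G j, ∃ y ∈ G (j + 1), (x, y) ∈ F j) →
    (∀ j, a ≤ j → j < b → ∀ y ∈ G (j + 1), ∃ x ∈ G j, (x, y) ∈ F j) →
    (∀ j, a ≤ j → j < b → ∀ x ∈ C j, ∀ y ∈ G (j + 1), (x, y) ∈ F j → y ∈ C (j + 1)) →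
    ∀ S : Finset ℕ, (∀ i ∈ S, a ≤ i ∧ i < b ∧
      ∃ x y, x ∈ G i ∧ x ∉ C i ∧ y ∈ G (i + 1) ∧ y ∈ C (i + 1) ∧ (x, y) ∈ F i) → S.card ≤ K := by
  obtain ⟨K, hK⟩ := ramsey_triangle (Set A × Set A × Set A × Set A × Set (A × A))
  refine ⟨K, fun n p hp G C F a b hG hF hr hl hC S hS => ?_⟩
  by_contra hcard
  obtain ⟨i, hi, j, hj, k, hk, hij, hjk, h1, h2⟩ := hK S (by omega)
    (fun i j => (G i, G j, C i, C j, {q : A × A | Walk G F i q.1 j q.2}))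
  simp only [Prod.mk.injEq, true_and] at h1 h2
  obtain ⟨hGjk, hCjk, hRik⟩ := h1
  obtain ⟨hGij, -, hCij, -, hRjk⟩ := h2
  obtain ⟨hai, hib, b0, c0, hb0, hb0C, hc0, hc0C, hbc⟩ := hS i hi
  obtain ⟨haj, hjb, -⟩ := hS j hj
  obtain ⟨hak, hkb, -⟩ := hS k hk
  have eik : ∀ x y, Walk G F i x j y ↔ Walk G F i x k y := fun x y => by
    have := Set.ext_iff.mp hRik (x, y); exact this
  have ejk : ∀ x y, Walk G F i x j y ↔ Walk G F j x k y := fun x y => by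
    have := Set.ext_iff.mp hRjk (x, y); exact this
  have tr : ∀ s t, a ≤ s → s ≤ t → t ≤ b → ∀ x ∈ G s, ∃ y, Walk G F s x t y := by
    intro s t has hst
    induction t, hst using Nat.le_induction with
    | base => intro _ x hx; exact ⟨x, .refl hx⟩
    | succ t hst ih =>
      intro htb x hx
      obtain ⟨y, hy⟩ := ih (by omega) x hx
      obtain ⟨z, hz, hyz⟩ := hr t (by omega) (by omega) y hy.memR
      exact ⟨z, hy.step hyz hz⟩
  have tl : ∀ s t, a ≤ s → s ≤ t → t ≤ b → ∀ y ∈ G t, ∃ x, Walk G F s x t y := by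
    intro s t has hst
    induction t, hst using Nat.le_induction with
    | base => intro _ x hx; exact ⟨x, .refl hx⟩
    | succ t hst ih =>
      intro htb y hy
      obtain ⟨x, hx, hxy⟩ := hl t (by omega) (by omega) y hy
      obtain ⟨w, hw⟩ := ih (by omega) x hx
      exact ⟨w, hw.step hxy hy⟩
  have cl : ∀ s t x y, a ≤ s → t ≤ b → x ∈ C s → Walk G F s x t y → y ∈ C t := by
    intro s t x y has htb hx hw
    induction hw with
    | refl _ => exact hx
    | step hw h1 h2 ih =>
      have := hw.le
      exact hC _ (by omega) (by omega) _ (ih (by omega)) _ h2 h1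
  obtain ⟨c1, hc1⟩ := tr (i + 1) j (by omega) (by omega) (by omega) c0 hc0
  refine key_algebra n p hp (fun x y => Walk G F i x j y) (G i) (C i) ?_ ?_ ?_ ?_ ?_ ?_ ?_ b0 c1
    hb0C ?_ ?_
  · intro k hk x x' y y' z z' h1 h2 h3
    exact Walk.pres hij.le (fun t h h' => hG t (by omega) (by omega) k hk)
      (fun t h h' => hF t (by omega) (by omega) k hk) h1 h2 h3
  · intro x y z hxy hyz
    exact (eik _ _).mpr (hxy.trans ((ejk _ _).mp hyz))
  · intro x z hxz
    obtain ⟨y, hy1, hy2⟩ := ((eik _ _).mp hxz).split hij.le hjk.le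
    exact ⟨y, hy1, (ejk _ _).mpr hy2⟩
  · intro x y h
    exact ⟨h.memL, by rw [hGij]; exact h.memR⟩
  · intro x hx
    exact tr i j hai hij.le hjb.le x hx
  · intro x hx
    exact tl i j hai hij.le hjb.le x (by rw [← hGij]; exact hx)
  · intro x y hx hw
    rw [hCij]
    exact cl i j x y hai hjb.le hx hw
  · rw [hCij]
    exact cl (i + 1) j c0 c1 (by omega) hjb.le hc0C hc1
  · exact (((Walk.refl hb0).step hbc hc0)).trans hc1

/-! ### Reversible derivability -/

section eqv
variable {A : Type}

def Supp (W : Finset ℕ) (P : (ℕ → A) → Prop) : Prop :=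
  ∀ f g : ℕ → A, (∀ i ∈ W, f i = g i) → (P f ↔ P g)

theorem Supp.mono {W W' : Finset ℕ} {P : (ℕ → A) → Prop} (h : Supp W P) (hW : W ⊆ W') :
    Supp W' P := fun f g hfg => h f g (fun i hi => hfg i (hW hi))

theorem Supp.and {W : Finset ℕ} {P Q : (ℕ → A) → Prop} (h : Supp W P) (h' : Supp W Q) :
    Supp W (fun f => P f ∧ Q f) := fun f g hfg => and_congr (h f g hfg) (h' f g hfg)

theorem Supp.at {v : ℕ} {S : Set A} : Supp {v} (fun f : ℕ → A => f v ∈ S) := by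
  intro f g h
  show f v ∈ S ↔ g v ∈ S
  rw [h v (by simp)]

theorem Supp.true {W : Finset ℕ} : Supp W (fun _ : ℕ → A => True) := fun _ _ _ => Iff.rfl

variable (con : Finset ℕ → (ℕ → A) → Prop)

def Stp (m : ℕ) (P Q : (ℕ → A) → Prop) : Prop :=
  ∃ W : Finset ℕ, W.card ≤ m ∧ Supp W P ∧ Supp W Q ∧ ∀ f, con W f → (P f ↔ Q f)

def Eqv (m : ℕ) : ((ℕ → A) → Prop) → ((ℕ → A) → Prop) → Prop := Relation.ReflTransGen (Stp con m)

def Der (m : ℕ) (P : (ℕ → A) → Prop) : Prop := Eqv con m (fun _ => True) P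

variable {con}

theorem Eqv.mono {m m' : ℕ} {P Q : (ℕ → A) → Prop} (h : Eqv con m P Q) (hm : m ≤ m') :
    Eqv con m' P Q :=
  Relation.ReflTransGen.mono (fun _ _ ⟨W, h1, h2⟩ => ⟨W, h1.trans hm, h2⟩) _ _ h

theorem Eqv.symm {m : ℕ} {P Q : (ℕ → A) → Prop} (h : Eqv con m P Q) : Eqv con m Q P := by
  induction h with
  | refl => exact .refl
  | tail _ h ih =>
    obtain ⟨W, h1, h2, h3, h4⟩ := h
    exact .head ⟨W, h1, h3, h2, fun f hf => (h4 f hf).symm⟩ ih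

theorem Eqv.of {m : ℕ} {P Q : (ℕ → A) → Prop} {W : Finset ℕ} (hW : W.card ≤ m) (h1 : Supp W P)
    (h2 : Supp W Q) (h : ∀ f, con W f → (P f ↔ Q f)) : Eqv con m P Q :=
  .single ⟨W, hW, h1, h2, h⟩

theorem Eqv.ctx
    (hcon : ∀ W W' : Finset ℕ, W ⊆ W' → ∀ f, con W' f → con W f) {m m' : ℕ} {P Q S : (ℕ → A) → Prop} (h : Eqv con m P Q) {W' : Finset ℕ}
    (hS : Supp W' S) (hW' : W'.card ≤ m') :
    Eqv con (m + m') (fun f => P f ∧ S f) (fun f => Q f ∧ S f) := by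
  induction h with
  | refl => exact .refl
  | tail _ h ih =>
    obtain ⟨W, h1, h2, h3, h4⟩ := h
    refine .tail ih ⟨W ∪ W', ?_, ?_, ?_, ?_⟩
    · exact (Finset.card_union_le _ _).trans (by omega)
    · exact (h2.mono Finset.subset_union_left).and (hS.mono Finset.subset_union_right)
    · exact (h3.mono Finset.subset_union_left).and (hS.mono Finset.subset_union_right)
    · intro f hf
      exact and_congr_left' (h4 f (hcon _ _ Finset.subset_union_left f hf))

theorem Der.add
    (hcon : ∀ W W' : Finset ℕ, W ⊆ W' → ∀ f, con W' f → con W f) {m m' : ℕ} {P S : (ℕ → A) → Prop} (h : Der con m P) {W' : Finset ℕ}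
    (hS : Supp W' S) (hW' : W'.card ≤ m') :
    Eqv con (m + m') S (fun f => P f ∧ S f) := by
  have := Eqv.ctx hcon h hS hW'
  simpa only [true_and] using this

theorem Der.and
    (hcon : ∀ W W' : Finset ℕ, W ⊆ W' → ∀ f, con W' f → con W f) {m m' w : ℕ} {P Q : (ℕ → A) → Prop} (h : Der con m P) (h' : Der con m' Q)
    {W : Finset ℕ} (hP : Supp W P) (hW : W.card ≤ w) :
    Der con (m + m' + w) (fun f => P f ∧ Q f) := by
  have h2 := (Der.add hcon h' hP hW).mono (m' := m + m' + w) (by omega)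
  have h3 : Der con (m + m' + w) (fun f => Q f ∧ P f) :=
    Relation.ReflTransGen.trans (Eqv.mono h (by omega)) h2
  simpa only [and_comm] using h3

/-- Weakening along the constraints. -/
theorem Der.imp
    (hcon : ∀ W W' : Finset ℕ, W ⊆ W' → ∀ f, con W' f → con W f) {m w : ℕ} {P Q : (ℕ → A) → Prop} (h : Der con m P)
    {W : Finset ℕ} (hW : W.card ≤ w) (hP : Supp W P) (hQ : Supp W Q)
    (hPQ : ∀ f, con W f → P f → Q f) : Der con (m + w) Q := by
  have h1 : Eqv con (m + w) P (fun f => P f ∧ Q f) :=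
    Eqv.of (W := W) (by omega) hP (hP.and hQ) (fun f hf => by
      have := hPQ f hf; tauto)
  have h2 := Der.add hcon h hQ hW
  exact (Relation.ReflTransGen.trans (Eqv.mono h (by omega)) h1).trans h2.symm

/-- A step which uses a derivable fact. -/
theorem Eqv.stack
    (hcon : ∀ W W' : Finset ℕ, W ⊆ W' → ∀ f, con W' f → con W f) {m w : ℕ} {P Q Q' : (ℕ → A) → Prop} (h : Der con m P)
    {W : Finset ℕ} (hW : W.card ≤ w) (hP : Supp W P) (hQ : Supp W Q) (hQ' : Supp W Q')
    (hPQ : ∀ f, con W f → P f → (Q f ↔ Q' f)) : Eqv con (m + w) Q Q' := by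
  have h1 : Eqv con (m + w) (fun f => P f ∧ Q f) (fun f => P f ∧ Q' f) :=
    Eqv.of (W := W) (by omega) (hP.and hQ) (hP.and hQ') (fun f hf => by
      have := hPQ f hf; tauto)
  exact ((Der.add hcon h hQ hW).trans h1).trans (Der.add hcon h hQ' hW).symm

end eqv

theorem Der.mono {A : Type} {con : Finset ℕ → (ℕ → A) → Prop} {m m' : ℕ} {P : (ℕ → A) → Prop}
    (h : Der con m P) (hm : m ≤ m') : Der con m' P := Eqv.mono h hm

/-- The standing assumptions on a path with variables `v j`, domains `G j`, edges `F j`. -/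
structure Good {A : Type} (con : Finset ℕ → (ℕ → A) → Prop) (n : ℕ) (p : ℕ → A → A → A → A)
    (m : ℕ) (v : ℕ → ℕ) (G : ℕ → Set A) (F : ℕ → Set (A × A)) (a b : ℕ) : Prop where
  presG : ∀ j, a ≤ j → j ≤ b → ∀ k ≤ n, Pres3Set (p k) (G j)
  presF : ∀ j, a ≤ j → j < b → ∀ k ≤ n, Pres3Rel (p k) (F j)
  der : ∀ j, a ≤ j → j ≤ b → Der con m (fun f => f (v j) ∈ G j)
  edge : ∀ j, a ≤ j → j < b → ∀ f (W : Finset ℕ), v j ∈ W → v (j + 1) ∈ W → con W f →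
    (f (v j), f (v (j + 1))) ∈ F j

/-- Propagation in a subdirect path. -/
theorem sub_lemma {A : Type} {con : Finset ℕ → (ℕ → A) → Prop}
    (hcon : ∀ W W' : Finset ℕ, W ⊆ W' → ∀ f, con W' f → con W f)
    {n : ℕ} {p : ℕ → A → A → A → A} {m : ℕ} {v : ℕ → ℕ} {G : ℕ → Set A} {F : ℕ → Set (A × A)}
    {a b : ℕ} (hab : a ≤ b) (hg : Good con n p m v G F a b) (K : ℕ) (C : ℕ → Set A)
    (hK : ∀ S : Finset ℕ, (∀ i ∈ S, a ≤ i ∧ i < b ∧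
      ∃ x y, x ∈ G i ∧ x ∉ C i ∧ y ∈ G (i + 1) ∧ y ∈ C (i + 1) ∧ (x, y) ∈ F i) → S.card ≤ K)
    (hC : ∀ j, a ≤ j → j < b → ∀ x ∈ C j, ∀ y ∈ G (j + 1), (x, y) ∈ F j → y ∈ C (j + 1))
    (hCa : Der con m (fun f => f (v a) ∈ C a)) :
    Der con (3 * m + 2 * K + 10) (fun f => f (v b) ∈ C b) := by
  classical
  let Bk : Finset ℕ := (Finset.Ico a b).filter (fun i =>
      ∃ x y, x ∈ G i ∧ x ∉ C i ∧ y ∈ G (i + 1) ∧ y ∈ C (i + 1) ∧ (x, y) ∈ F i)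
  have hBk : ∀ i, i ∈ Bk ↔ a ≤ i ∧ i < b ∧
      ∃ x y, x ∈ G i ∧ x ∉ C i ∧ y ∈ G (i + 1) ∧ y ∈ C (i + 1) ∧ (x, y) ∈ F i := by
    intro i; simp only [Bk, Finset.mem_filter, Finset.mem_Ico, and_assoc]
  have hBc : Bk.card ≤ K := hK Bk (fun i hi => (hBk i).mp hi)
  let V : Finset ℕ := Bk.image v
  have hVc : V.card ≤ K := Finset.card_image_le.trans hBc
  let T : ℕ → (ℕ → A) → Prop := fun j f => (∀ i ∈ Bk, i < j → f (v i) ∈ C i) ∧ f (v j) ∈ C j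
  have hT : ∀ j (W : Finset ℕ), V ⊆ W → v j ∈ W → Supp W (T j) := by
    intro j W hV hj f g hfg
    have e1 : ∀ i ∈ Bk, f (v i) = g (v i) := fun i hi =>
      hfg _ (hV (Finset.mem_image_of_mem v hi))
    simp only [T]
    rw [hfg _ hj]
    refine and_congr_left fun _ => ?_
    refine forall₂_congr fun i hi => ?_
    rw [e1 i hi]
  have main : ∀ j, a ≤ j → j ≤ b → Eqv con (2 * m + K + 5) (T a) (T j) := by
    intro j haj
    induction j, haj using Nat.le_induction with
    | base => intro _; exact .refl
    | succ j haj ih =>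
      intro hjb
      have hG := Der.and hcon (hg.der j haj (by omega)) (hg.der (j + 1) (by omega) hjb)
        (W := {v j}) (w := 1) Supp.at (by simp)
      let W : Finset ℕ := V ∪ {v j, v (j + 1)}
      have hjW : v j ∈ W := by simp [W]
      have hjW' : v (j + 1) ∈ W := by simp [W]
      have hVW : V ⊆ W := Finset.subset_union_left
      have hWc : W.card ≤ K + 2 := by
        refine (Finset.card_union_le _ _).trans ?_
        have := Finset.card_le_two (a := v j) (b := v (j + 1))
        omega
      refine (ih (by omega)).trans ?_
      refine (Eqv.stack hcon hG (W := W) hWc ?_ (hT j W hVW hjW) (hT (j + 1) W hVW hjW') ?_).mono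
        (by omega)
      · exact (Supp.at.mono (by simpa using hjW)).and (Supp.at.mono (by simpa using hjW'))
      · intro f hf hGf
        have he := hg.edge j haj (by omega) f W hjW hjW' hf
        constructor
        · rintro ⟨h1, h2⟩
          refine ⟨fun i hi hij => ?_, hC j haj (by omega) _ h2 _ hGf.2 he⟩
          by_cases h : i = j
          · rw [h]; exact h2
          · exact h1 i hi (by omega)
        · rintro ⟨h1, h2⟩
          refine ⟨fun i hi hij => h1 i hi (by omega), ?_⟩
          by_cases hj : j ∈ Bk
          · exact h1 j hj (by omega)
          · by_contra hn
            exact hj ((hBk j).mpr ⟨haj, by omega, _, _, hGf.1, hn, hGf.2, h2, he⟩)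
  have hTa : T a = fun f => f (v a) ∈ C a := by
    funext f
    simp only [T]
    refine propext ⟨fun h => h.2, fun h => ⟨fun i hi hia => ?_, h⟩⟩
    have := ((hBk i).mp hi).1
    omega
  have hTb : Der con (2 * m + K + 5) (T b) := by
    have := main b hab le_rfl
    rw [hTa] at this
    exact Relation.ReflTransGen.trans (Eqv.mono hCa (by omega)) this
  refine (Der.imp hcon hTb (W := V ∪ {v b}) (w := K + 1) ?_ (hT b _ Finset.subset_union_left
    (by simp)) (Supp.at.mono Finset.subset_union_right) (fun f _ h => h.2)).mono (by omega)
  exact (Finset.card_union_le _ _).trans (by simpa using hVc)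

/-- The iterated memory bound. -/
def psi (φ : ℕ → ℕ) (m0 : ℕ) : ℕ → ℕ
  | 0 => m0
  | k + 1 => max m0 (φ (psi φ m0 k))

theorem induct_lemma {A : Type} [Finite A] {con : Finset ℕ → (ℕ → A) → Prop}
    {v : ℕ → ℕ} {G : ℕ → Set A} {F : ℕ → Set (A × A)}
    {a b m0 : ℕ} (φ : ℕ → ℕ)
    (hder : ∀ j, a ≤ j → j ≤ b → Der con m0 (fun f => f (v j) ∈ G j))
    (hφ : ∀ m u t, a ≤ u → u < t → t ≤ b →
      (∀ j, u + 1 ≤ j → j ≤ t → Der con m (fun f => f (v j) ∈ Rc G F (u + 1) j)) →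
      Der con (φ m) (fun f => f (v t) ∈ Rc G F u t))
    (u t : ℕ) (hau : a ≤ u) (hut : u ≤ t) (htb : t ≤ b) :
    Der con (psi φ m0 (Nat.card A)) (fun f => f (v t) ∈ Rc G F u t) := by
  have main : ∀ k u t, a ≤ u → u ≤ t → t ≤ b →
      (∀ j, u ≤ j → j ≤ t → ((Rc G F u j)ᶜ : Set A).ncard ≤ k) →
      Der con (psi φ m0 k) (fun f => f (v t) ∈ Rc G F u t) := by
    intro k
    induction k with
    | zero =>
      intro u t hau hut htb hc
      have h0 : ((Rc G F u t)ᶜ : Set A) = ∅ :=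
        (Set.ncard_eq_zero (Set.toFinite _)).mp (Nat.le_zero.mp (hc t hut le_rfl))
      have h1 : Rc G F u t = G t := by
        apply Set.Subset.antisymm (fun x hx => Rc.sub hx)
        intro x _
        rw [Set.compl_empty_iff.mp h0]; trivial
      rw [h1]
      exact hder t (by omega) htb
    | succ k ih =>
      intro u t hau hut htb hc
      obtain ⟨w, ⟨huw, hwt, hw⟩, hmax⟩ : ∃ w, (u ≤ w ∧ w ≤ t ∧ Rc G F u t = Rc G F w t) ∧
          ∀ w', w < w' → ¬ (u ≤ w' ∧ w' ≤ t ∧ Rc G F u t = Rc G F w' t) := by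
        have hfin : {w | u ≤ w ∧ w ≤ t ∧ Rc G F u t = Rc G F w t}.Finite :=
          (Set.finite_Iic t).subset (fun w hw => hw.2.1)
        obtain ⟨w, hw⟩ := hfin.exists_maximal ⟨u, le_rfl, hut, rfl⟩
        exact ⟨w, hw.prop, fun w' hlt h => absurd (hw.le_of_ge h hlt.le) (by omega)⟩
      rw [hw]
      by_cases hwt' : w = t
      · rw [hwt', Rc.self]
        exact (hder t (by omega) htb).mono (le_max_left _ _)
      · refine (hφ (psi φ m0 k) w t (by omega) (by omega) htb ?_).mono (le_max_right _ _)
        intro j hj1 hj2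
        refine ih (w + 1) j (by omega) (by omega) (by omega) ?_
        intro i hi1 hi2
        have hsub : Rc G F w i ⊆ Rc G F (w + 1) i := Rc.mono (by omega) hi1
        have hne : Rc G F w i ≠ Rc G F (w + 1) i := by
          intro he
          apply hmax (w + 1) (by omega)
          refine ⟨by omega, by omega, ?_⟩
          rw [hw]
          exact Rc.eq_prop (by omega) hi1 (by omega) he
        have hss : ((Rc G F (w + 1) i)ᶜ : Set A) ⊂ (Rc G F u i)ᶜ := by
          have h1 : ((Rc G F (w + 1) i)ᶜ : Set A) ⊂ (Rc G F w i)ᶜ :=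
            compl_lt_compl_iff_lt.mpr (hsub.ssubset_of_ne hne)
          exact h1.trans_subset (Set.compl_subset_compl.mpr (Rc.mono huw (by omega)))
        have := Set.ncard_lt_ncard hss (Set.toFinite _)
        have := hc i (by omega) (by omega)
        omega
  exact main _ u t hau hut htb (fun j _ _ => Set.ncard_le_card _)

/-- One reset step, given a subdirect family inside the reach sets. -/
theorem step_lemma {A : Type} {con : Finset ℕ → (ℕ → A) → Prop}
    (hcon : ∀ W W' : Finset ℕ, W ⊆ W' → ∀ f, con W' f → con W f)
    {n : ℕ} {p : ℕ → A → A → A → A} (hp : IsHMChain n p)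
    {m0 m : ℕ} {v : ℕ → ℕ} {G : ℕ → Set A} {F : ℕ → Set (A × A)}
    {a b : ℕ} (hg : Good con n p m0 v G F a b) (K : ℕ)
    (hK : ∀ (n : ℕ) (p : ℕ → A → A → A → A),
    IsHMChain n p → ∀ (G C : ℕ → Set A) (F : ℕ → Set (A × A)) (a b : ℕ),
    (∀ j, a ≤ j → j ≤ b → ∀ k ≤ n, Pres3Set (p k) (G j)) →
    (∀ j, a ≤ j → j < b → ∀ k ≤ n, Pres3Rel (p k) (F j)) →
    (∀ j, a ≤ j → j < b → ∀ x ∈ G j, ∃ y ∈ G (j + 1), (x, y) ∈ F j) →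
    (∀ j, a ≤ j → j < b → ∀ y ∈ G (j + 1), ∃ x ∈ G j, (x, y) ∈ F j) →
    (∀ j, a ≤ j → j < b → ∀ x ∈ C j, ∀ y ∈ G (j + 1), (x, y) ∈ F j → y ∈ C (j + 1)) →
    ∀ S : Finset ℕ, (∀ i ∈ S, a ≤ i ∧ i < b ∧
      ∃ x y, x ∈ G i ∧ x ∉ C i ∧ y ∈ G (i + 1) ∧ y ∈ C (i + 1) ∧ (x, y) ∈ F i) → S.card ≤ K)
    (u t : ℕ) (hau : a ≤ u) (hut : u < t) (htb : t ≤ b) (H : ℕ → Set A)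
    (hH : ∀ j, u + 1 ≤ j → j ≤ t → H j ⊆ Rc G F (u + 1) j)
    (hHt : H t = Rc G F (u + 1) t)
    (hHp : ∀ j, u + 1 ≤ j → j ≤ t → ∀ k ≤ n, Pres3Set (p k) (H j))
    (hHr : ∀ j, u + 1 ≤ j → j < t → ∀ x ∈ H j, ∃ y ∈ H (j + 1), (x, y) ∈ F j)
    (hHl : ∀ j, u + 1 ≤ j → j < t → ∀ x ∈ Rc G F (u + 1) j, ∀ y ∈ H (j + 1),
      (x, y) ∈ F j → x ∈ H j)
    (hHd : ∀ j, u + 1 ≤ j → j ≤ t → Der con m (fun f => f (v j) ∈ H j)) :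
    Der con (3 * (2 * m0 + m + 4) + 2 * K + 10) (fun f => f (v t) ∈ Rc G F u t) := by
  have hg' : Good con n p (2 * m0 + m + 4) v H F (u + 1) t := by
    refine ⟨hHp, fun j h1 h2 => hg.presF j (by omega) (by omega), fun j h1 h2 =>
      (hHd j h1 h2).mono (by omega), fun j h1 h2 => hg.edge j (by omega) (by omega)⟩
  have hC : ∀ j, u + 1 ≤ j → j < t → ∀ x ∈ Rc G F u j ∩ H j, ∀ y ∈ H (j + 1), (x, y) ∈ F j →
      y ∈ Rc G F u (j + 1) ∩ H (j + 1) := by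
    intro j h1 h2 x hx y hy hxy
    exact ⟨Rc.step hx.1 hxy (Rc.sub (hH (j + 1) (by omega) (by omega) hy)), hy⟩
  have hfin : Rc G F u t = Rc G F u t ∩ H t := by
    rw [hHt]
    exact (Set.inter_eq_left.mpr (Rc.mono (by omega) (by omega))).symm
  rw [hfin]
  refine sub_lemma hcon (C := fun j => Rc G F u j ∩ H j) (by omega) hg' K ?_ hC ?_
  · refine hK n p hp H _ F (u + 1) t hHp hg'.presF hHr ?_ hC
    intro j h1 h2 y hy
    obtain ⟨x, hx, hxy⟩ := Rc.pred (hH (j + 1) (by omega) (by omega) hy) h1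
    exact ⟨x, hHl j h1 h2 x hx y hy hxy, hxy⟩
  · have h1 := hg.der u hau (by omega)
    have h2 := hHd (u + 1) le_rfl (by omega)
    have h3 := Der.and hcon h1 h2 (W := {v u}) (w := 1) Supp.at (by simp)
    refine (Der.imp hcon h3 (W := {v u, v (u + 1)}) (w := 2) Finset.card_le_two ?_ ?_ ?_).mono
      (by omega)
    · exact (Supp.at.mono (by simp)).and (Supp.at.mono (by simp))
    · exact Supp.at.mono (by simp)
    · intro f hf hGf
      refine ⟨Rc.step (u := u) (j := u) (y := f (v u)) (by rw [Rc.self]; exact hGf.1)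
        (hg.edge u hau (by omega) f _ (by simp) (by simp) hf) ?_, hGf.2⟩
      exact Rc.sub (hH (u + 1) le_rfl (by omega) hGf.2)

/-- Memory for forward-total paths. -/
def mem1 (K c m0 : ℕ) : ℕ := psi (fun m => 3 * (2 * m0 + m + 4) + 2 * K + 10) m0 c

/-- Memory for general paths. -/
def mem2 (K c m0 : ℕ) : ℕ :=
  psi (fun m => 3 * (2 * m0 + mem1 K c m + 4) + 2 * K + 10) m0 c

theorem inner_lemma {A : Type} [Finite A] {con : Finset ℕ → (ℕ → A) → Prop}
    (hcon : ∀ W W' : Finset ℕ, W ⊆ W' → ∀ f, con W' f → con W f)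
    {n : ℕ} {p : ℕ → A → A → A → A} (hp : IsHMChain n p)
    {m0 : ℕ} {v : ℕ → ℕ} {G : ℕ → Set A} {F : ℕ → Set (A × A)}
    {a b : ℕ} (hg : Good con n p m0 v G F a b) (K : ℕ)
    (hK : ∀ (n : ℕ) (p : ℕ → A → A → A → A),
    IsHMChain n p → ∀ (G C : ℕ → Set A) (F : ℕ → Set (A × A)) (a b : ℕ),
    (∀ j, a ≤ j → j ≤ b → ∀ k ≤ n, Pres3Set (p k) (G j)) →
    (∀ j, a ≤ j → j < b → ∀ k ≤ n, Pres3Rel (p k) (F j)) →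
    (∀ j, a ≤ j → j < b → ∀ x ∈ G j, ∃ y ∈ G (j + 1), (x, y) ∈ F j) →
    (∀ j, a ≤ j → j < b → ∀ y ∈ G (j + 1), ∃ x ∈ G j, (x, y) ∈ F j) →
    (∀ j, a ≤ j → j < b → ∀ x ∈ C j, ∀ y ∈ G (j + 1), (x, y) ∈ F j → y ∈ C (j + 1)) →
    ∀ S : Finset ℕ, (∀ i ∈ S, a ≤ i ∧ i < b ∧
      ∃ x y, x ∈ G i ∧ x ∉ C i ∧ y ∈ G (i + 1) ∧ y ∈ C (i + 1) ∧ (x, y) ∈ F i) → S.card ≤ K)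
    (hr : ∀ j, a ≤ j → j < b → ∀ x ∈ G j, ∃ y ∈ G (j + 1), (x, y) ∈ F j)
    (u t : ℕ) (hau : a ≤ u) (hut : u ≤ t) (htb : t ≤ b) :
    Der con (mem1 K (Nat.card A) m0) (fun f => f (v t) ∈ Rc G F u t) := by
  refine induct_lemma _ hg.der ?_ u t hau hut htb
  intro m u t hau hut htb hd
  refine step_lemma hcon hp hg K hK u t hau hut htb (fun j => Rc G F (u + 1) j)
    (fun j _ _ => subset_rfl) rfl ?_ ?_ (fun j _ _ x hx _ _ _ => hx) hd
  · intro j h1 h2 k hk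
    exact Rc.pres h1 (fun t h h' => hg.presG t (by omega) (by omega) k hk)
      (fun t h h' => hg.presF t (by omega) (by omega) k hk)
  · intro j h1 h2 x hx
    obtain ⟨y, hy, hxy⟩ := hr j (by omega) (by omega) x (Rc.sub hx)
    exact ⟨y, Rc.step hx hxy hy, hxy⟩

theorem outer_lemma {A : Type} [Finite A] {con : Finset ℕ → (ℕ → A) → Prop}
    (hcon : ∀ W W' : Finset ℕ, W ⊆ W' → ∀ f, con W' f → con W f)
    {n : ℕ} {p : ℕ → A → A → A → A} (hp : IsHMChain n p)
    {m0 : ℕ} {v : ℕ → ℕ} {G : ℕ → Set A} {F : ℕ → Set (A × A)}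
    {a b : ℕ} (hg : Good con n p m0 v G F a b) (K : ℕ)
    (hK : ∀ (n : ℕ) (p : ℕ → A → A → A → A),
    IsHMChain n p → ∀ (G C : ℕ → Set A) (F : ℕ → Set (A × A)) (a b : ℕ),
    (∀ j, a ≤ j → j ≤ b → ∀ k ≤ n, Pres3Set (p k) (G j)) →
    (∀ j, a ≤ j → j < b → ∀ k ≤ n, Pres3Rel (p k) (F j)) →
    (∀ j, a ≤ j → j < b → ∀ x ∈ G j, ∃ y ∈ G (j + 1), (x, y) ∈ F j) →
    (∀ j, a ≤ j → j < b → ∀ y ∈ G (j + 1), ∃ x ∈ G j, (x, y) ∈ F j) →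
    (∀ j, a ≤ j → j < b → ∀ x ∈ C j, ∀ y ∈ G (j + 1), (x, y) ∈ F j → y ∈ C (j + 1)) →
    ∀ S : Finset ℕ, (∀ i ∈ S, a ≤ i ∧ i < b ∧
      ∃ x y, x ∈ G i ∧ x ∉ C i ∧ y ∈ G (i + 1) ∧ y ∈ C (i + 1) ∧ (x, y) ∈ F i) → S.card ≤ K)
    (u t : ℕ) (hau : a ≤ u) (hut : u ≤ t) (htb : t ≤ b) :
    Der con (mem2 K (Nat.card A) m0) (fun f => f (v t) ∈ Rc G F u t) := by
  refine induct_lemma _ hg.der ?_ u t hau hut htb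
  intro m u t hau hut htb hd
  -- the reversed path
  let G' : ℕ → Set A := fun j => Rc G F (u + 1) (t - j)
  let F' : ℕ → Set (A × A) := fun j => {q | (q.2, q.1) ∈ F (t - j - 1)}
  let v' : ℕ → ℕ := fun j => v (t - j)
  have hpR : ∀ j, u + 1 ≤ j → j ≤ t → ∀ k ≤ n, Pres3Set (p k) (Rc G F (u + 1) j) := by
    intro j h1 h2 k hk
    exact Rc.pres h1 (fun t h h' => hg.presG t (by omega) (by omega) k hk)
      (fun t h h' => hg.presF t (by omega) (by omega) k hk)
  have hg' : Good con n p m v' G' F' 0 (t - (u + 1)) := by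
    refine ⟨?_, ?_, ?_, ?_⟩
    · intro j _ h2 k hk
      exact hpR (t - j) (by omega) (by omega) k hk
    · intro j _ h2 k hk x y z hx hy hz
      exact hg.presF (t - j - 1) (by omega) (by omega) k hk _ _ _ hx hy hz
    · intro j _ h2
      exact hd (t - j) (by omega) (by omega)
    · intro j _ h2 f W h3 h4 hf
      have e1 : t - j = (t - j - 1) + 1 := by omega
      have e2 : t - (j + 1) = t - j - 1 := by omega
      have := hg.edge (t - j - 1) (by omega) (by omega) f W
        (by simp only [v'] at h4; rwa [e2] at h4)
        (by simp only [v'] at h3; rwa [e1] at h3) hf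
      change (f (v (t - (j + 1))), f (v (t - j))) ∈ F (t - j - 1)
      rw [e2]
      rw [← e1] at this
      exact this
  have hr' : ∀ j, 0 ≤ j → j < t - (u + 1) → ∀ x ∈ G' j, ∃ y ∈ G' (j + 1), (x, y) ∈ F' j := by
    intro j _ h2 x hx
    have e1 : t - j = (t - j - 1) + 1 := by omega
    have e2 : t - (j + 1) = t - j - 1 := by omega
    simp only [G'] at hx ⊢
    rw [e1] at hx
    rw [e2]
    exact Rc.pred hx (by omega)
  have hin := inner_lemma hcon hp hg' K hK hr'
  have hsucc : ∀ j, j < t → t - j = (t - (j + 1)) + 1 := fun j h => by omega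
  have hF' : ∀ j, j < t → F' (t - (j + 1)) = {q | (q.2, q.1) ∈ F j} := by
    intro j h
    have e : t - (t - (j + 1)) - 1 = j := by omega
    simp only [F', e]
  have hG' : ∀ j, j ≤ t → G' (t - j) = Rc G F (u + 1) j := by
    intro j h
    have e : t - (t - j) = j := by omega
    simp only [G', e]
  refine step_lemma hcon hp hg K hK u t hau hut htb (fun j => Rc G' F' 0 (t - j)) ?_ ?_ ?_ ?_ ?_ ?_
  · intro j h1 h2 x hx
    rw [← hG' j h2]
    exact Rc.sub hx
  · show Rc G' F' 0 (t - t) = _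
    rw [Nat.sub_self, Rc.self]
    simp only [G', Nat.sub_zero]
  · intro j h1 h2 k hk
    exact Rc.pres (Nat.zero_le _) (fun s h h' => hg'.presG s h (by omega) k hk)
      (fun s h h' => hg'.presF s h (by omega) k hk)
  · intro j h1 h2 x hx
    simp only [hsucc j h2] at hx
    obtain ⟨y, hy, hyx⟩ := Rc.pred hx (Nat.zero_le _)
    rw [hF' j h2] at hyx
    exact ⟨y, hy, hyx⟩
  · intro j h1 h2 x hx y hy hxy
    show x ∈ Rc G' F' 0 (t - j)
    rw [hsucc j h2]
    refine Rc.step hy ?_ ?_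
    · rw [hF' j h2]; exact hxy
    · rw [← hsucc j h2, hG' j h2.le]; exact hx
  · intro j h1 h2
    have := hin 0 (t - j) le_rfl (Nat.zero_le _) (by omega)
    have e : t - (t - j) = j := by omega
    simp only [v', e] at this
    exact this

/-! ### From reversible derivability to the symmetric Datalog program -/

/-- The constraints of `I` inside a set of variables. -/
def conOf {A : Type} (I : Instance A ℕ) (W : Finset ℕ) (f : ℕ → A) : Prop :=
  ∀ c ∈ I.constraints, (∀ i, c.2.1 i ∈ W) → (fun i => f (c.2.1 i)) ∈ c.2.2

/-- The relation on the (enumerated) support `W` given by `P`. -/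
def relOf {A : Type} (W : Finset ℕ) (P : (ℕ → A) → Prop) : Set (Fin W.card → A) :=
  {g | ∃ f : ℕ → A, (∀ i, f (W.orderEmbOfFin rfl i) = g i) ∧ P f}

theorem mem_relOf {A : Type} {W : Finset ℕ} {P : (ℕ → A) → Prop} (hP : Supp W P) (f : ℕ → A) :
    (fun i => f (W.orderEmbOfFin rfl i)) ∈ relOf W P ↔ P f := by
  constructor
  · rintro ⟨g, hg, hPg⟩
    refine (hP g f ?_).mp hPg
    intro i hi
    have : i ∈ Set.range (W.orderEmbOfFin rfl) := by
      rw [Finset.range_orderEmbOfFin]; exact hi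
    obtain ⟨t, rfl⟩ := this
    exact hg t
  · intro h
    exact ⟨f, fun _ => rfl, h⟩

theorem derives_of_der {A : Type} [Finite A] [Nonempty A] (𝔸 : RelStruct A) (I : Instance A ℕ)
    (hI : IsCSPInstance 𝔸 I) (h2 : ∀ c ∈ I.constraints, c.1 ≤ 2) {m : ℕ}
    {P : (ℕ → A) → Prop} (h : Der (conOf I) m P) :
    ∀ W : Finset ℕ, W.card ≤ m → Supp W P →
      Derives 𝔸 (2 * m + 2) I (W.orderEmbOfFin rfl) (relOf W P) := by
  classical
  -- atoms for finite sets
  have enum : ∀ W : Finset ℕ, W.card ≤ 2 * m + 2 → ∃ ω : Fin (2 * m + 2) → ℕ,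
      Function.Injective ω ∧ ∀ w ∈ W, w ∈ Set.range ω := by
    intro W hW
    obtain ⟨U, hWU, hU⟩ := Infinite.exists_superset_card_eq W (2 * m + 2) hW
    refine ⟨U.orderEmbOfFin hU, (U.orderEmbOfFin hU).injective, fun w hw => ?_⟩
    rw [Finset.range_orderEmbOfFin]
    exact hWU hw
  induction h with
  | refl =>
    intro W hW hS
    obtain ⟨ω, hω, hr⟩ := enum W (by omega)
    choose sc hsc using fun i : Fin W.card =>
      hr (W.orderEmbOfFin rfl i) (Finset.orderEmbOfFin_mem _ _ _)
    have := Derives.step (𝔸 := 𝔸) (I := I) (r := 2 * m + 2)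
      { head := ⟨W.card, sc, relOf W (fun _ => True)⟩
        idb := none
        edb := []
        head_arity := by simp only; omega
        idb_arity := by simp
        edb_arity := by simp
        edb_basic := by simp
        nodup := by simp
        consistent := by
          intro f _ _
          refine ⟨Function.extend ω f (fun _ => Classical.arbitrary A), fun i => ?_, trivial⟩
          simp only
          rw [← hsc, hω.extend_apply]
        mirror := by simp } ω (by simp) (by simp)
    simpa only [hsc] using this
  | @tail P Q _ hstep ih =>
    intro W' hW' hQ'
    obtain ⟨W, hW, hP, hQ, hPQ⟩ := hstep
    have ih' := ih W hW hP
    obtain ⟨ω, hω, hr⟩ := enum (W ∪ W') ((Finset.card_union_le _ _).trans (by omega))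
    choose sc hsc using fun i : Fin W.card =>
      hr (W.orderEmbOfFin rfl i) (Finset.mem_union_left _ (Finset.orderEmbOfFin_mem _ _ _))
    choose sc' hsc' using fun i : Fin W'.card =>
      hr (W'.orderEmbOfFin rfl i) (Finset.mem_union_right _ (Finset.orderEmbOfFin_mem _ _ _))
    let aP : Atom A (2 * m + 2) := ⟨W.card, sc, relOf W P⟩
    let aQ : Atom A (2 * m + 2) := ⟨W'.card, sc', relOf W' Q⟩
    let ed : Set (Atom A (2 * m + 2)) := {a |
      (⟨a.arity, fun i => ω (a.scope i), a.rel⟩ :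
          Σ n : ℕ, (Fin n → ℕ) × Set (Fin n → A)) ∈ I.constraints}
    have hed : ed.Finite := by
      refine (Set.finite_range (fun x : (Σ n : Fin 3, (Fin n → Fin (2 * m + 2)) ×
        Set (Fin n → A)) => (⟨x.1, x.2.1, x.2.2⟩ : Atom A (2 * m + 2)))).subset ?_
      intro a ha
      have := h2 _ ha
      exact ⟨⟨⟨a.arity, by simp only at this; omega⟩, a.scope, a.rel⟩, rfl⟩
    let ext : (Fin (2 * m + 2) → A) → ℕ → A := fun f =>
      Function.extend ω f (fun _ => Classical.arbitrary A)
    have hext : ∀ f t, ext f (ω t) = f t := fun f t => hω.extend_apply _ _ _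
    have hPh : ∀ f, aP.holds f ↔ P (ext f) := by
      intro f
      rw [← mem_relOf hP (ext f)]
      have : (fun i => f (aP.scope i)) = fun i => ext f (W.orderEmbOfFin rfl i) := by
        funext i
        rw [← hsc, hext]
      unfold Atom.holds
      rw [this]
    have hQh : ∀ f, aQ.holds f ↔ Q (ext f) := by
      intro f
      rw [← mem_relOf hQ' (ext f)]
      have : (fun i => f (aQ.scope i)) = fun i => ext f (W'.orderEmbOfFin rfl i) := by
        funext i
        rw [← hsc', hext]
      unfold Atom.holds
      rw [this]
    have hc : ∀ f, (∀ a ∈ hed.toFinset.toList, a.holds f) → conOf I W (ext f) := by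
      intro f hf c hc hcW
      choose s hs using fun i => hr (c.2.1 i) (Finset.mem_union_left _ (hcW i))
      have := hf ⟨c.1, s, c.2.2⟩ (by
        simp only [Finset.mem_toList, Set.Finite.mem_toFinset]
        show (⟨c.1, fun i => ω (s i), c.2.2⟩ :
          Σ n : ℕ, (Fin n → ℕ) × Set (Fin n → A)) ∈ I.constraints
        simp only [hs]
        exact hc)
      have e : (fun i => ext f (c.2.1 i)) = fun i => f (s i) := by
        funext i
        rw [← hs, hext]
      rw [e]
      exact this
    have := Derives.step (𝔸 := 𝔸) (I := I) (r := 2 * m + 2)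
      { head := aQ
        idb := some aP
        edb := hed.toFinset.toList
        head_arity := by show W'.card ≤ _; omega
        idb_arity := by
          intro a ha
          obtain rfl : aP = a := by simpa using ha
          show W.card ≤ _
          omega
        edb_arity := by
          intro a ha
          simp only [Finset.mem_toList, Set.Finite.mem_toFinset] at ha
          have := h2 _ ha
          simp only at this
          omega
        edb_basic := by
          intro a ha
          simp only [Finset.mem_toList, Set.Finite.mem_toFinset] at ha
          exact hI _ ha
        nodup := Finset.nodup_toList _
        consistent := by
          intro f h1 h2
          rw [hQh, ← hPQ _ (hc f h2), ← hPh]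
          exact h1 aP (by simp)
        mirror := by
          intro a ha f h1 h2
          obtain rfl : aP = a := by simpa using ha
          rw [hPh, hPQ _ (hc f h2), ← hQh]
          exact h1 } ω
      (by
        intro a ha
        obtain rfl : aP = a := by simpa using ha
        simp only [aP, hsc]
        exact ih')
      (by
        intro a ha
        simp only [Finset.mem_toList, Set.Finite.mem_toFinset] at ha
        exact ha)
    simpa only [aQ, hsc'] using this

/-- corollary: one bound per structure.
For each relational structure `𝔸` admitting a chain of `n` Hagemann–Mitschke
terms as polymorphisms there is an `M ∈ ℕ` such that `𝒫_𝔸^M(I) ⊢ G` for every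
unsatisfiable path instance `I` of `CSP(𝔸)`. -/
theorem statement15 {A : Type} [Finite A] (𝔸 : RelStruct A)
    (hfin : 𝔸.basic.Finite)
    (n : ℕ) (p : ℕ → A → A → A → A) (hp : IsHMChain n p)
    (hpoly : ∀ k ≤ n, IsPolymorphism 𝔸 (ternaryOp (p k))) :
    ∃ M : ℕ, ∀ I : PathInstance A, IsCSPInstance 𝔸 I.toInstance →
      (¬∃ f : ℕ → A, IsSolution I f) → DerivesGoal 𝔸 M I.toInstance := by
  classical
  obtain ⟨K, hK⟩ := backward_bound A
  refine ⟨2 * mem2 K (Nat.card A) 1 + 2, fun I hI hun => ?_⟩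
  rcases isEmpty_or_nonempty A with hA | hA
  · refine ⟨1, fun _ => 0, by omega, ?_⟩
    exact Derives.step (𝔸 := 𝔸) (I := I.toInstance)
      { head := ⟨1, fun _ => 0, ∅⟩
        idb := none
        edb := []
        head_arity := by simp
        idb_arity := by simp
        edb_arity := by simp
        edb_basic := by simp
        nodup := by simp
        consistent := fun f _ _ => (IsEmpty.false (f 0)).elim
        mirror := by simp } (fun _ => 0) (by simp) (by simp)
  · have hlen : 1 ≤ I.len := by
      by_contra h
      refine hun ⟨fun _ => Classical.arbitrary A, fun i h1 h2 => ?_, fun i h1 h2 => ?_⟩ <;> omega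
    have hB : ∀ j, 1 ≤ j → j ≤ I.len →
        (⟨1, fun _ => j, unaryRel (I.B j)⟩ : Σ n : ℕ, (Fin n → ℕ) × Set (Fin n → A)) ∈
          I.toInstance.constraints := fun j h1 h2 => Or.inl ⟨j, h1, h2, rfl⟩
    have hE : ∀ j, 1 ≤ j → j < I.len →
        (⟨2, ![j, j + 1], pairRel (I.E j)⟩ : Σ n : ℕ, (Fin n → ℕ) × Set (Fin n → A)) ∈
          I.toInstance.constraints := fun j h1 h2 => Or.inr ⟨j, h1, h2, rfl⟩
    have hcon : ∀ W W' : Finset ℕ, W ⊆ W' → ∀ f : ℕ → A, conOf I.toInstance W' f →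
        conOf I.toInstance W f :=
      fun W W' hWW f hf c hc hcW => hf c hc (fun i => hWW (hcW i))
    have hg : Good (conOf I.toInstance) n p 1 (fun j => j) I.B I.E 1 I.len := by
      refine ⟨?_, ?_, ?_, ?_⟩
      · intro j h1 h2 k hk x y z hx hy hz
        have := hpoly k hk _ (hI _ (hB j h1 h2)) ![fun _ => x, fun _ => y, fun _ => z] (by
          intro i
          fin_cases i
          · exact hx
          · exact hy
          · exact hz)
        exact this
      · intro j h1 h2 k hk x y z hx hy hz
        have := hpoly k hk _ (hI _ (hE j h1 h2)) ![![x.1, x.2], ![y.1, y.2], ![z.1, z.2]] (by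
          intro i
          fin_cases i
          · exact hx
          · exact hy
          · exact hz)
        exact this
      · intro j h1 h2
        refine Eqv.of (W := {j}) (by simp) Supp.true Supp.at ?_
        intro f hf
        refine ⟨fun _ => ?_, fun _ => trivial⟩
        exact hf _ (hB j h1 h2) (fun i => by simp)
      · intro j h1 h2 f W h3 h4 hf
        refine hf _ (hE j h1 h2) (fun i => ?_)
        fin_cases i
        · exact h3
        · exact h4
    have hder := outer_lemma hcon hp hg K hK 1 I.len le_rfl hlen le_rfl
    have hemp : Rc I.B I.E 1 I.len = ∅ := by
      rw [Set.eq_empty_iff_forall_notMem]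
      rintro y ⟨x, hw⟩
      have ext : ∀ j y, Walk I.B I.E 1 x j y → ∃ s : ℕ → A, s j = y ∧ IsSolutionOn I 1 j s := by
        intro j y hw
        induction hw with
        | refl h =>
          refine ⟨fun _ => x, rfl, fun i h1 h2 => ?_, fun i h1 h2 => by omega⟩
          obtain rfl : i = 1 := by omega
          exact h
        | @step j y z hw h1 h2 ih =>
          obtain ⟨s, hs, hs1, hs2⟩ := ih
          refine ⟨Function.update s (j + 1) z, by simp, fun i hi1 hi2 => ?_, fun i hi1 hi2 => ?_⟩
          · by_cases hij : i = j + 1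
            · subst hij; simpa using h2
            · rw [Function.update_of_ne hij]
              exact hs1 i hi1 (by omega)
          · rw [Function.update_of_ne (by omega : i ≠ j + 1)]
            by_cases hij : i = j
            · subst hij
              rw [Function.update_self, hs]
              exact h1
            · rw [Function.update_of_ne (by omega)]
              exact hs2 i hi1 (by omega)
      obtain ⟨s, _, hs⟩ := ext _ y hw
      exact hun ⟨s, hs⟩
    have h2 : ∀ c ∈ I.toInstance.constraints, c.1 ≤ 2 := by
      rintro c (⟨i, _, _, rfl⟩ | ⟨i, _, _, rfl⟩) <;> simp
    simp only [hemp, Set.mem_empty_iff_false] at hder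
    have hfinal := derives_of_der 𝔸 I.toInstance hI h2 hder ∅ (by simp) (fun _ _ _ => Iff.rfl)
    have hrel : relOf (A := A) ∅ (fun _ => False) = ∅ := by
      apply Set.eq_empty_of_forall_notMem
      rintro g ⟨f, -, hf⟩
      exact hf
    rw [hrel] at hfinal
    exact ⟨_, _, by simp, hfinal⟩

end CSPPaper
end
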